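/- Suppose α > β > 0 satisfy ((k−1)/2^{k−1})(α−β) > √(4(k−1)((k/2^k)α + (1 − k/2^k)β)). Then, for (σ, ℋ) ∼ HSBM(n,p,q;k) with W = W(ℋ), the third-smallest eigenvalue of Π L_Γ Π is strictly positive with probability 1 − o(1) as n → ∞. -/

import Mathlib

open Finset Filter Matrix

open scoped Classical

/-- The `k`-element subsets of `[n]`, i.e. the potential hyperedges. -/
abbrev KSet (n k : ℕ) := {e : Finset (Fin n) // e.card = k}

/-- A `±1` label vector (encoded by `Bool`) is balanced if it has equally many
`+1`'s (`true`) and `-1`'s (`false`). -/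
abbrev balanced {n : ℕ} (σ : Fin n → Bool) : Prop :=
  2 * (Finset.univ.filter (fun i => σ i = true)).card = n

/-- `e` is in-cluster w.r.t. `σ`: `σ` is constant on `e`. -/
abbrev inCluster {n : ℕ} (σ : Fin n → Bool) (e : Finset (Fin n)) : Prop :=
  ∀ i ∈ e, ∀ j ∈ e, σ i = σ j

/-- Probability that `e` appears as an edge, given the labels `σ`. -/
noncomputable def edgeP {n : ℕ} (p q : ℝ) (σ : Fin n → Bool) (e : Finset (Fin n)) : ℝ :=
  if inCluster σ e then p else q

/-- Probability of observing exactly the hypergraph with edge-indicator `E`, given labels `σ`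
(edges appear independently). -/
noncomputable def hypProb {n k : ℕ} (p q : ℝ) (σ : Fin n → Bool) (E : KSet n k → Bool) : ℝ :=
  ∏ e : KSet n k, if E e then edgeP p q σ e.1 else 1 - edgeP p q σ e.1

/-- Uniform prior on balanced label vectors. -/
noncomputable def sigProb (n : ℕ) (σ : Fin n → Bool) : ℝ :=
  if balanced σ then 1 / ((Finset.univ.filter (fun τ : Fin n → Bool => balanced τ)).card : ℝ)
  else 0

/-- Probability of an event `P` under the joint law `HSBM(n,p,q;k)` of `(σ, ℋ)`. -/
noncomputable def prEvent (n k : ℕ) (p q : ℝ)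
    (P : (Fin n → Bool) → (KSet n k → Bool) → Prop) : ℝ :=
  ∑ σ : Fin n → Bool, ∑ E : KSet n k → Bool,
    sigProb n σ * hypProb p q σ E * (if P σ E then 1 else 0)

/-- Global sign flip. -/
def negB {n : ℕ} (σ : Fin n → Bool) : Fin n → Bool := fun i => !(σ i)

/-- The edge probability parameter `α · log n / C(n-1, k-1)`. -/
noncomputable def pParam (k : ℕ) (α : ℝ) (n : ℕ) : ℝ :=
  α * Real.log n / ((n - 1).choose (k - 1) : ℝ)

/-- The real `±1` vector associated to a Boolean label vector. -/
def sgn {n : ℕ} (σ : Fin n → Bool) : Fin n → ℝ := fun i => if σ i then 1 else -1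

/-- The rank-one matrix `σσᵀ`. -/
noncomputable def outer {n : ℕ} (σ : Fin n → Bool) : Matrix (Fin n) (Fin n) ℝ :=
  Matrix.of fun i j => sgn σ i * sgn σ j

/-- The weighted adjacency matrix `W(H)`: `W i j` is the number of hyperedges containing
both `i` and `j` (zero on the diagonal). -/
noncomputable def Wmat {n k : ℕ} (E : KSet n k → Bool) : Matrix (Fin n) (Fin n) ℝ :=
  Matrix.of fun i j => if i = j then 0 else
    ((Finset.univ.filter (fun e : KSet n k => E e = true ∧ i ∈ e.1 ∧ j ∈ e.1)).card : ℝ)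

/-- Feasibility for the SDP relaxation: `X ⪰ 0`, unit diagonal, `⟨X, 𝟙𝟙ᵀ⟩ = 0`. -/
def sdpFeasible {n : ℕ} (X : Matrix (Fin n) (Fin n) ℝ) : Prop :=
  X.PosSemidef ∧ (∀ i, X i i = 1) ∧ (∑ i, ∑ j, X i j) = 0

/-- The SDP objective `⟨W, X⟩`. -/
noncomputable def sdpObj {n : ℕ} (W X : Matrix (Fin n) (Fin n) ℝ) : ℝ :=
  ∑ i, ∑ j, W i j * X i j

/-- `Xs` is the unique optimal solution of the SDP with input `W`. -/
def sdpUniqueOpt {n : ℕ} (W Xs : Matrix (Fin n) (Fin n) ℝ) : Prop :=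
  sdpFeasible Xs ∧ ∀ X, sdpFeasible X → X ≠ Xs → sdpObj W X < sdpObj W Xs

/-- `Γ = diag(σ) W diag(σ)`. -/
noncomputable def GammaM {n : ℕ} (σ : Fin n → Bool) (W : Matrix (Fin n) (Fin n) ℝ) :
    Matrix (Fin n) (Fin n) ℝ :=
  Matrix.diagonal (sgn σ) * W * Matrix.diagonal (sgn σ)

/-- The Laplacian `L_Γ = diag(Γ𝟙) - Γ`. -/
noncomputable def LGamma {n : ℕ} (σ : Fin n → Bool) (W : Matrix (Fin n) (Fin n) ℝ) :
    Matrix (Fin n) (Fin n) ℝ :=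
  Matrix.diagonal (fun i => ∑ j, GammaM σ W i j) - GammaM σ W

/-- `Π = I - (1/n)𝟙𝟙ᵀ - (1/n)σσᵀ`, the projector onto `span{𝟙, σ}ᗮ`. -/
noncomputable def PiM {n : ℕ} (σ : Fin n → Bool) : Matrix (Fin n) (Fin n) ℝ :=
  1 - (n : ℝ)⁻¹ • Matrix.of (fun _ _ => (1 : ℝ)) - (n : ℝ)⁻¹ • outer σ

/-- The third-smallest eigenvalue of a symmetric matrix, via the Courant–Fischer
max–min characterization over subspaces of dimension `n - 2`. -/
noncomputable def lambda3 {n : ℕ} (M : Matrix (Fin n) (Fin n) ℝ) : ℝ :=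
  sSup {r : ℝ | ∃ V : Submodule ℝ (Fin n → ℝ), Module.finrank ℝ V = n - 2 ∧
    ∀ x ∈ V, r * (∑ i, x i ^ 2) ≤ x ⬝ᵥ M.mulVec x}

section ProbLemmas

set_option linter.unusedSectionVars false

/-- Product Bernoulli weight. -/
noncomputable def bern {ι : Type*} [Fintype ι] (w : ι → ℝ) (E : ι → Bool) : ℝ :=
  ∏ e, if E e then w e else 1 - w e

/-- Probability of an event under a product Bernoulli law. -/
noncomputable def PrB {ι : Type*} [Fintype ι] [DecidableEq ι] (w : ι → ℝ)
    (Q : (ι → Bool) → Prop) : ℝ :=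
  ∑ E : ι → Bool, bern w E * (if Q E then 1 else 0)

/-- Indicator of a Boolean. -/
noncomputable def ind (b : Bool) : ℝ := if b then 1 else 0

lemma ind_nonneg (b : Bool) : 0 ≤ ind b := by unfold ind; split_ifs <;> norm_num

variable {ι : Type*} [Fintype ι] [DecidableEq ι]

lemma bern_nonneg {w : ι → ℝ} (h0 : ∀ e, 0 ≤ w e) (h1 : ∀ e, w e ≤ 1) (E : ι → Bool) :
    0 ≤ bern w E := by
  unfold bern
  apply Finset.prod_nonneg
  intro e _
  split_ifs
  · exact h0 e
  · linarith [h1 e]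

lemma bern_exp (w a : ι → ℝ) :
    ∑ E : ι → Bool, bern w E * Real.exp (∑ e, a e * ind (E e))
      = ∏ e, (1 + w e * (Real.exp (a e) - 1)) := by
  have : ∀ E : ι → Bool, bern w E * Real.exp (∑ e, a e * ind (E e))
      = ∏ e, (fun e b => (if b = true then w e else 1 - w e) * Real.exp (a e * ind b)) e (E e) := by
    intro E
    unfold bern
    rw [Real.exp_sum, ← Finset.prod_mul_distrib]
  rw [Finset.sum_congr rfl (fun E _ => this E)]
  refine Eq.trans (Fintype.prod_sum (fun (e : ι) (b : Bool) =>
    (if b = true then w e else 1 - w e) * Real.exp (a e * ind b))).symm ?_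
  apply Finset.prod_congr rfl
  intro e _
  simp [ind]
  ring

lemma bern_sum (w : ι → ℝ) : ∑ E : ι → Bool, bern w E = 1 := by
  have := bern_exp w (fun _ => 0)
  simpa using this

lemma PrB_mono {w : ι → ℝ} (h0 : ∀ e, 0 ≤ w e) (h1 : ∀ e, w e ≤ 1) {P Q : (ι → Bool) → Prop}
    (h : ∀ E, P E → Q E) : PrB w P ≤ PrB w Q := by
  unfold PrB
  apply Finset.sum_le_sum
  intro E _
  apply mul_le_mul_of_nonneg_left _ (bern_nonneg h0 h1 E)
  by_cases hp : P E
  · simp [hp, h E hp]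
  · simp only [hp, if_false]; split_ifs <;> norm_num

lemma PrB_le_one {w : ι → ℝ} (h0 : ∀ e, 0 ≤ w e) (h1 : ∀ e, w e ≤ 1) (P : (ι → Bool) → Prop) :
    PrB w P ≤ 1 := by
  rw [← bern_sum w]
  apply Finset.sum_le_sum
  intro E _
  have := bern_nonneg h0 h1 E
  split_ifs <;> simp [this]

lemma PrB_compl (w : ι → ℝ) (P : (ι → Bool) → Prop) :
    PrB w P = 1 - PrB w (fun E => ¬ P E) := by
  rw [← bern_sum w]
  unfold PrB
  rw [← Finset.sum_sub_distrib]
  apply Finset.sum_congr rfl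
  intro E _
  by_cases h : P E <;> simp [h]

lemma PrB_or {w : ι → ℝ} (h0 : ∀ e, 0 ≤ w e) (h1 : ∀ e, w e ≤ 1) (P Q : (ι → Bool) → Prop) :
    PrB w (fun E => P E ∨ Q E) ≤ PrB w P + PrB w Q := by
  unfold PrB
  rw [← Finset.sum_add_distrib]
  apply Finset.sum_le_sum
  intro E _
  have := bern_nonneg h0 h1 E
  by_cases h : P E <;> by_cases h' : Q E <;> simp [h, h', this]

lemma PrB_union {w : ι → ℝ} (h0 : ∀ e, 0 ≤ w e) (h1 : ∀ e, w e ≤ 1) {κ : Type*}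
    (s : Finset κ) (Q : κ → (ι → Bool) → Prop) :
    PrB w (fun E => ∃ i ∈ s, Q i E) ≤ ∑ i ∈ s, PrB w (Q i) := by
  unfold PrB
  rw [Finset.sum_comm]
  apply Finset.sum_le_sum
  intro E _
  rw [← Finset.mul_sum]
  apply mul_le_mul_of_nonneg_left _ (bern_nonneg h0 h1 E)
  have hn : ∀ i ∈ s, (0:ℝ) ≤ (if Q i E then 1 else 0) := by
    intro i _; split_ifs <;> norm_num
  split_ifs with h
  · obtain ⟨i, hi, hq⟩ := h
    have := Finset.single_le_sum hn hi
    simpa [hq] using this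
  · exact Finset.sum_nonneg hn

lemma PrB_chernoff {w : ι → ℝ} (h0 : ∀ e, 0 ≤ w e) (h1 : ∀ e, w e ≤ 1) (a : ι → ℝ) (t : ℝ) :
    PrB w (fun E => t ≤ ∑ e, a e * ind (E e))
      ≤ Real.exp (-t + ∑ e, w e * (Real.exp (a e) - 1)) := by
  have key : PrB w (fun E => t ≤ ∑ e, a e * ind (E e))
      ≤ ∑ E : ι → Bool, Real.exp (-t) * (bern w E * Real.exp (∑ e, a e * ind (E e))) := by
    unfold PrB
    apply Finset.sum_le_sum
    intro E _
    have hb := bern_nonneg h0 h1 E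
    have : (if t ≤ ∑ e, a e * ind (E e) then (1:ℝ) else 0)
        ≤ Real.exp (-t) * Real.exp (∑ e, a e * ind (E e)) := by
      rw [← Real.exp_add]
      split_ifs with h
      · apply Real.one_le_exp; linarith
      · positivity
    calc _ ≤ bern w E * (Real.exp (-t) * Real.exp (∑ e, a e * ind (E e))) :=
          mul_le_mul_of_nonneg_left this hb
      _ = _ := by ring
  refine key.trans ?_
  rw [← Finset.mul_sum, bern_exp, Real.exp_add, Real.exp_sum]
  apply mul_le_mul_of_nonneg_left _ (Real.exp_pos _).le
  apply Finset.prod_le_prod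
  · intro e _
    nlinarith [h0 e, h1 e, Real.exp_pos (a e), mul_nonneg (h0 e) (Real.exp_pos (a e)).le]
  · intro e _
    linarith [Real.add_one_le_exp (w e * (Real.exp (a e) - 1))]

end ProbLemmas

lemma prEvent_bounds {n k : ℕ} {p q : ℝ} (hp0 : 0 ≤ p) (hp1 : p ≤ 1) (hq0 : 0 ≤ q) (hq1 : q ≤ 1)
    (P : (Fin n → Bool) → (KSet n k → Bool) → Prop) (hex : ∃ σ : Fin n → Bool, balanced σ)
    (b : ℝ)
    (hb : ∀ σ : Fin n → Bool, balanced σ →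
      PrB (fun e : KSet n k => edgeP p q σ e.1) (fun E => ¬ P σ E) ≤ b) :
    1 - b ≤ prEvent n k p q P ∧ prEvent n k p q P ≤ 1 := by
  have hw0 : ∀ (σ : Fin n → Bool) (e : KSet n k), 0 ≤ edgeP p q σ e.1 := by
    intro σ e; unfold edgeP; split_ifs <;> assumption
  have hw1 : ∀ (σ : Fin n → Bool) (e : KSet n k), edgeP p q σ e.1 ≤ 1 := by
    intro σ e; unfold edgeP; split_ifs <;> assumption
  have heq : prEvent n k p q P = ∑ σ : Fin n → Bool, sigProb n σ *
      PrB (fun e : KSet n k => edgeP p q σ e.1) (P σ) := by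
    unfold prEvent PrB
    apply Finset.sum_congr rfl
    intro σ _
    rw [Finset.mul_sum]
    apply Finset.sum_congr rfl
    intro E _
    rw [mul_assoc]
    rfl
  have hs0 : ∀ σ, 0 ≤ sigProb n σ := by
    intro σ; unfold sigProb; split_ifs <;> positivity
  have hs1 : ∑ σ : Fin n → Bool, sigProb n σ = 1 := by
    unfold sigProb
    rw [← Finset.sum_filter, Finset.sum_const, nsmul_eq_mul]
    have : (Finset.univ.filter (fun τ : Fin n → Bool => balanced τ)).card ≠ 0 := by
      obtain ⟨σ, hσ⟩ := hex
      apply Finset.card_ne_zero_of_mem (a := σ)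
      simpa using hσ
    have h2 : ((Finset.univ.filter (fun τ : Fin n → Bool => balanced τ)).card : ℝ) ≠ 0 := by
      exact_mod_cast this
    field_simp
  rw [heq]
  constructor
  · calc 1 - b = ∑ σ : Fin n → Bool, sigProb n σ * (1 - b) := by
          rw [← Finset.sum_mul, hs1, one_mul]
      _ ≤ _ := by
          apply Finset.sum_le_sum
          intro σ _
          by_cases hσ : balanced σ
          · apply mul_le_mul_of_nonneg_left _ (hs0 σ)
            rw [PrB_compl]
            linarith [hb σ hσ]
          · have : sigProb n σ = 0 := by unfold sigProb; rw [if_neg hσ]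
            simp [this]
  · calc _ ≤ ∑ σ : Fin n → Bool, sigProb n σ * 1 := by
          apply Finset.sum_le_sum
          intro σ _
          exact mul_le_mul_of_nonneg_left (PrB_le_one (hw0 σ) (hw1 σ) _) (hs0 σ)
      _ = 1 := by simp [hs1]

/-- Peeling bound for the quadratic form of a nonnegative symmetric matrix. -/
lemma peel {n : ℕ} (W : Fin n → Fin n → ℝ) (hsym : ∀ i j, W i j = W j i)
    (hnn : ∀ i j, 0 ≤ W i j) (hdiag : ∀ i, W i i = 0) (y : Fin n → ℝ)
    (h l : ℝ) (hl : 0 < l) :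
    ∀ (N : ℕ) (S : Finset (Fin n)), S.card = N →
      (∀ T ⊆ S, ∑ i ∈ T, ∑ j ∈ T, W i j ≤ h * T.card) →
      ∑ i ∈ S, ∑ j ∈ S, W i j * y i * y j
        ≤ ∑ i ∈ S, y i ^ 2 * (h * l + (∑ j ∈ S, W i j) / l) := by
  intro N
  induction N with
  | zero =>
    intro S hS _
    rw [Finset.card_eq_zero] at hS
    subst hS
    simp
  | succ N ih =>
    intro S hS hT
    have hne : S.Nonempty := by
      rw [← Finset.card_pos]; omega
    obtain ⟨a, ha, hda⟩ : ∃ a ∈ S, ∑ j ∈ S, W a j ≤ h := by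
      apply Finset.exists_le_of_sum_le hne
      have := hT S (le_refl _)
      simpa [mul_comm] using this
    set R := S.erase a with hR
    have haR : a ∉ R := Finset.notMem_erase a S
    have hSR : S = insert a R := (Finset.insert_erase ha).symm
    have hcR : R.card = N := by
      rw [hR, Finset.card_erase_of_mem ha, hS]; rfl
    have IH := ih R hcR (fun T hTR => hT T (hTR.trans (Finset.erase_subset a S)))
    have hda' : ∑ j ∈ R, W a j ≤ h := by
      rw [hSR, Finset.sum_insert haR, hdiag, zero_add] at hda
      exact hda
    rw [hSR]
    rw [Finset.sum_insert haR, Finset.sum_insert haR, Finset.sum_insert haR, Finset.sum_insert haR,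
      hdiag]
    have e1 : ∑ i ∈ R, ∑ j ∈ insert a R, W i j * y i * y j
        = ∑ j ∈ R, W a j * y a * y j + ∑ i ∈ R, ∑ j ∈ R, W i j * y i * y j := by
      rw [← Finset.sum_add_distrib]
      apply Finset.sum_congr rfl
      intro i _
      rw [Finset.sum_insert haR, hsym i a]
      ring
    have e2 : ∑ i ∈ R, y i ^ 2 * (h * l + (∑ j ∈ insert a R, W i j) / l)
        = ∑ i ∈ R, y i ^ 2 * (h * l + (∑ j ∈ R, W i j) / l) + ∑ j ∈ R, W a j * y j ^ 2 / l := by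
      rw [← Finset.sum_add_distrib]
      apply Finset.sum_congr rfl
      intro i _
      rw [Finset.sum_insert haR, hsym i a]
      ring
    rw [e1, e2]
    have e3 : 2 * ∑ j ∈ R, W a j * y a * y j
        ≤ (∑ j ∈ R, W a j) * (l * y a ^ 2) + ∑ j ∈ R, W a j * y j ^ 2 / l := by
      rw [Finset.sum_mul, Finset.mul_sum, ← Finset.sum_add_distrib]
      apply Finset.sum_le_sum
      intro j _
      have : 2 * (y a * y j) ≤ l * y a ^ 2 + y j ^ 2 / l := by
        have h2 : l * y a ^ 2 + y j ^ 2 / l - 2 * (y a * y j) = (l * y a - y j) ^ 2 / l := by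
          field_simp
          ring
        have : 0 ≤ (l * y a - y j) ^ 2 / l := by positivity
        linarith
      calc 2 * (W a j * y a * y j) = W a j * (2 * (y a * y j)) := by ring
        _ ≤ W a j * (l * y a ^ 2 + y j ^ 2 / l) := mul_le_mul_of_nonneg_left this (hnn a j)
        _ = _ := by ring
    have e4 : (∑ j ∈ R, W a j) * (l * y a ^ 2) ≤ h * (l * y a ^ 2) :=
      mul_le_mul_of_nonneg_right hda' (by positivity)
    have e5 : 0 ≤ y a ^ 2 * ((∑ j ∈ R, W a j) / l) := by
      have : 0 ≤ ∑ j ∈ R, W a j := Finset.sum_nonneg (fun j _ => hnn a j)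
      positivity
    have e6 : y a ^ 2 * (h * l + (0 + ∑ j ∈ R, W a j) / l)
        = h * (l * y a ^ 2) + y a ^ 2 * ((∑ j ∈ R, W a j) / l) := by ring
    rw [e6]
    have : (0:ℝ) * y a * y a = 0 := by ring
    rw [this]
    linarith

lemma exists_sign {n : ℕ} (c u : Fin n → ℝ) (hu : ∀ i, |u i| ≤ 1) :
    ∃ s : Fin n → Bool, ∑ i, u i * c i ≤ ∑ i, sgn s i * c i := by
  refine ⟨fun i => decide (0 ≤ c i), Finset.sum_le_sum ?_⟩
  intro i _
  have h1 : u i * c i ≤ |c i| := by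
    calc u i * c i ≤ |u i * c i| := le_abs_self _
      _ = |u i| * |c i| := abs_mul _ _
      _ ≤ 1 * |c i| := mul_le_mul_of_nonneg_right (hu i) (abs_nonneg _)
      _ = |c i| := one_mul _
  refine h1.trans (le_of_eq ?_)
  by_cases h : 0 ≤ c i
  · simp [sgn, h, abs_of_nonneg]
  · simp [sgn, h, abs_of_neg (not_le.mp h)]

/-- The bilinear form on the cube is controlled by sign vectors. -/
lemma cube_bound {n : ℕ} (B : Fin n → Fin n → ℝ) (t : ℝ)
    (hB : ∀ s r : Fin n → Bool, ∑ i, ∑ j, B i j * (sgn s i * sgn r j) ≤ t)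
    (u : Fin n → ℝ) (hu : ∀ i, |u i| ≤ 1) : ∑ i, ∑ j, B i j * (u i * u j) ≤ t := by
  obtain ⟨s, hs⟩ := exists_sign (fun i => ∑ j, B i j * u j) u hu
  obtain ⟨r, hr⟩ := exists_sign (fun j => ∑ i, B i j * sgn s i) u hu
  refine le_trans ?_ (hB s r)
  calc ∑ i, ∑ j, B i j * (u i * u j) = ∑ i, u i * ∑ j, B i j * u j := by
        apply Finset.sum_congr rfl; intro i _; rw [Finset.mul_sum]
        apply Finset.sum_congr rfl; intro j _; ring
    _ ≤ ∑ i, sgn s i * ∑ j, B i j * u j := hs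
    _ = ∑ j, u j * ∑ i, B i j * sgn s i := by
        simp_rw [Finset.mul_sum]
        rw [Finset.sum_comm]
        apply Finset.sum_congr rfl; intro j _
        apply Finset.sum_congr rfl; intro i _; ring
    _ ≤ ∑ j, sgn r j * ∑ i, B i j * sgn s i := hr
    _ = _ := by
        simp_rw [Finset.mul_sum]
        rw [Finset.sum_comm]
        apply Finset.sum_congr rfl; intro j _
        apply Finset.sum_congr rfl; intro i _; ring

lemma cube_bound' {n : ℕ} (B : Fin n → Fin n → ℝ) (t : ℝ)
    (hB : ∀ s r : Fin n → Bool, ∑ i, ∑ j, B i j * (sgn s i * sgn r j) ≤ t)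
    (u : Fin n → ℝ) (M : ℝ) (hM : 0 < M) (hu : ∀ i, |u i| ≤ M) :
    ∑ i, ∑ j, B i j * (u i * u j) ≤ M ^ 2 * t := by
  have := cube_bound B t hB (fun i => u i / M) (fun i => by
    rw [abs_div, abs_of_pos hM, div_le_one hM]; exact hu i)
  calc ∑ i, ∑ j, B i j * (u i * u j) = M ^ 2 * ∑ i, ∑ j, B i j * (u i / M * (u j / M)) := by
        simp_rw [Finset.mul_sum]
        apply Finset.sum_congr rfl; intro i _
        apply Finset.sum_congr rfl; intro j _
        field_simp
    _ ≤ _ := mul_le_mul_of_nonneg_left this (by positivity)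

set_option maxHeartbeats 1000000 in
lemma quad_bound {n : ℕ} (hn : 0 < n) (W EW : Fin n → Fin n → ℝ) (hsym : ∀ i j, W i j = W j i)
    (hnn : ∀ i j, 0 ≤ W i j) (hdiag : ∀ i, W i i = 0) (y : Fin n → ℝ)
    (d C C' g h e K1 K2 l : ℝ) (hd : 0 ≤ d) (hC : 0 ≤ C) (hC' : 0 ≤ C') (hh : 0 ≤ h)
    (hK1 : 0 < K1) (hK12 : K1 ≤ K2) (hl : 0 < l) (hg : 1 ≤ g * K1 ^ 2)
    (hEW0 : ∀ i j, 0 ≤ EW i j) (hEW1 : ∀ i j, EW i j ≤ C * d / n)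
    (hEWy : ∑ i, ∑ j, EW i j * (y i * y j) ≤ 0)
    (hdeg : ∀ i, ∑ j, W i j ≤ C' * d)
    (hsp : ∀ S : Finset (Fin n), (S.card : ℝ) ≤ g * n →
      ∑ i ∈ S, ∑ j ∈ S, W i j ≤ h * d * S.card)
    (hcut : ∀ s r : Fin n → Bool, ∑ i, ∑ j, (W i j - EW i j) * (sgn s i * sgn r j) ≤ e * d * n) :
    ∑ i, ∑ j, W i j * (y i * y j) ≤
      (K2 ^ 2 * e + 2 * C / K2 + 2 * (K1 / K2) * C' + (h * l + C' / l)) * d * ∑ i, y i ^ 2 := by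
  have hK2 : 0 < K2 := lt_of_lt_of_le hK1 hK12
  have hn' : (0:ℝ) < n := by exact_mod_cast hn
  set Q := ∑ i, y i ^ 2 with hQ
  have hQ0 : 0 ≤ Q := Finset.sum_nonneg (fun i _ => sq_nonneg _)
  rcases hQ0.eq_or_lt with hz | hpos
  · have hy0 : ∀ i, y i = 0 := by
      intro i
      have := (Finset.sum_eq_zero_iff_of_nonneg (fun i _ => sq_nonneg (y i))).mp hz.symm i
        (Finset.mem_univ i)
      simpa using this
    rw [← hz]
    simp [hy0]
  set τ := Real.sqrt (Q / n) with hτ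
  have hτ0 : 0 < τ := Real.sqrt_pos.mpr (by positivity)
  have hτ2 : τ ^ 2 * n = Q := by
    rw [hτ, Real.sq_sqrt (by positivity)]; field_simp
  set u : Fin n → ℝ := fun i => if |y i| ≤ K2 * τ then y i else 0 with hu
  set v : Fin n → ℝ := fun i => if |y i| ≤ K2 * τ then 0 else |y i| with hv
  set B := Finset.univ.filter (fun i => K1 * τ < |y i|) with hBdef
  -- size of the big set
  have hBc : (B.card : ℝ) ≤ g * n := by
    have h1 : (B.card : ℝ) * (K1 ^ 2 * τ ^ 2) ≤ Q := by
      calc (B.card : ℝ) * (K1 ^ 2 * τ ^ 2) = ∑ i ∈ B, (K1 ^ 2 * τ ^ 2) := by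
            rw [Finset.sum_const, nsmul_eq_mul]
        _ ≤ ∑ i ∈ B, y i ^ 2 := by
            apply Finset.sum_le_sum
            intro i hi
            have := (Finset.mem_filter.mp hi).2
            rw [← sq_abs (y i), ← mul_pow]
            exact pow_le_pow_left₀ (by positivity) this.le 2
        _ ≤ Q := Finset.sum_le_univ_sum_of_nonneg (fun i => sq_nonneg _)
    rw [← hτ2] at h1
    have h2 : (B.card : ℝ) * K1 ^ 2 ≤ n := by
      have : 0 < τ ^ 2 := by positivity
      nlinarith
    have : (B.card : ℝ) * 1 ≤ B.card * (g * K1 ^ 2) :=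
      mul_le_mul_of_nonneg_left hg (by positivity)
    have hg0 : 0 < g := by
      by_contra hcon
      nlinarith [sq_nonneg K1]
    nlinarith
  have hpeel := peel W hsym hnn hdiag (fun i => |y i|) (h * d) l hl B.card B rfl (by
    intro T hT
    apply hsp T
    refine le_trans ?_ hBc
    exact_mod_cast Finset.card_le_card hT)
  have hpeel2 : ∑ i ∈ B, ∑ j ∈ B, W i j * |y i| * |y j| ≤ (h * l + C' / l) * d * Q := by
    refine hpeel.trans ?_
    have hterm : ∀ i ∈ B, |y i| ^ 2 * (h * d * l + (∑ j ∈ B, W i j) / l)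
        ≤ y i ^ 2 * ((h * l + C' / l) * d) := by
      intro i _
      rw [sq_abs]
      apply mul_le_mul_of_nonneg_left _ (sq_nonneg _)
      have : ∑ j ∈ B, W i j ≤ C' * d :=
        (Finset.sum_le_univ_sum_of_nonneg (fun j => hnn i j)).trans (hdeg i)
      have : (∑ j ∈ B, W i j) / l ≤ C' * d / l := by gcongr
      calc _ ≤ h * d * l + C' * d / l := by linarith
        _ = _ := by ring
    refine (Finset.sum_le_sum hterm).trans ?_
    rw [← Finset.sum_mul, mul_comm]
    have : 0 ≤ (h * l + C' / l) * d := by positivity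
    exact mul_le_mul_of_nonneg_left
      (Finset.sum_le_univ_sum_of_nonneg (fun i => sq_nonneg _)) this
  have hyn : ∑ i, |y i| ≤ n * τ := by
    apply le_of_sq_le_sq _ (by positivity)
    have := sq_sum_le_card_mul_sum_sq (s := (Finset.univ : Finset (Fin n))) (f := fun i => |y i|)
    simp only [sq_abs, Finset.card_univ, Fintype.card_fin] at this
    rw [mul_pow]
    nlinarith
  have hvn : ∑ i, v i ≤ n * τ / K2 := by
    have : ∀ i, v i ≤ y i ^ 2 / (K2 * τ) := by
      intro i
      simp only [hv]
      split_ifs with h1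
      · positivity
      · rw [le_div_iff₀ (by positivity), ← sq_abs (y i)]
        nlinarith [abs_nonneg (y i), not_le.mp h1]
    refine (Finset.sum_le_sum (fun i _ => this i)).trans (le_of_eq ?_)
    rw [← Finset.sum_div, ← hQ, ← hτ2]
    field_simp
  have hv0 : ∀ i, 0 ≤ v i := by
    intro i; simp only [hv]; split_ifs
    · exact le_refl _
    · exact abs_nonneg _
  have hcube := cube_bound' (fun i j => W i j - EW i j) (e * d * n) hcut u (K2 * τ) (by positivity)
    (by
      intro i; simp only [hu]; split_ifs with h1
      · exact h1
      · simp; positivity)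
  -- pointwise bounds
  have hp1 : ∀ i j, W i j * (y i * y j) ≤ (W i j - EW i j) * (u i * u j) + EW i j * (u i * u j)
      + (if i ∈ B then (if j ∈ B then W i j * |y i| * |y j| else 0) else 0)
      + (K1 / K2) * (W i j * y i ^ 2 + W i j * y j ^ 2) := by
    intro i j
    have hw := hnn i j
    have hab : W i j * (y i * y j) ≤ W i j * |y i| * |y j| := by
      rw [mul_assoc]
      apply mul_le_mul_of_nonneg_left _ hw
      rw [← abs_mul]; exact le_abs_self _
    have hlast : 0 ≤ (K1 / K2) * (W i j * y i ^ 2 + W i j * y j ^ 2) := by positivity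
    have hmid : 0 ≤ (if i ∈ B then (if j ∈ B then W i j * |y i| * |y j| else 0) else 0) := by
      split_ifs <;> positivity
    by_cases hs : |y i| ≤ K2 * τ ∧ |y j| ≤ K2 * τ
    · have h1 : u i = y i := by simp [hu, hs.1]
      have h2 : u j = y j := by simp [hu, hs.2]
      rw [h1, h2]
      linarith
    · have h1 : u i * u j = 0 := by
        rw [not_and_or] at hs
        rcases hs with hs | hs <;> simp [hu, hs]
      rw [h1]
      by_cases hiB : i ∈ B
      · by_cases hjB : j ∈ B
        · simp only [hiB, hjB, if_true]
          linarith
        · have hj : |y j| ≤ K1 * τ := by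
            by_contra hcon
            exact hjB (Finset.mem_filter.mpr ⟨Finset.mem_univ _, not_le.mp hcon⟩)
          have hi : K2 * τ < |y i| := by
            by_contra hcon
            exact hs ⟨not_lt.mp hcon, hj.trans (by gcongr)⟩
          have : |y j| ≤ K1 / K2 * |y i| := by
            rw [div_mul_eq_mul_div, le_div_iff₀ hK2]
            calc |y j| * K2 ≤ K1 * τ * K2 := by gcongr
              _ = K1 * (K2 * τ) := by ring
              _ ≤ K1 * |y i| := by gcongr
          have : W i j * |y i| * |y j| ≤ K1 / K2 * (W i j * y i ^ 2) := by
            calc W i j * |y i| * |y j| ≤ W i j * |y i| * (K1 / K2 * |y i|) := by gcongr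
              _ = K1 / K2 * (W i j * |y i| ^ 2) := by ring
              _ = _ := by rw [sq_abs]
          have : 0 ≤ K1 / K2 * (W i j * y j ^ 2) := by positivity
          linarith
      · have hj : |y i| ≤ K1 * τ := by
          by_contra hcon
          exact hiB (Finset.mem_filter.mpr ⟨Finset.mem_univ _, not_le.mp hcon⟩)
        have hi : K2 * τ < |y j| := by
          by_contra hcon
          exact hs ⟨hj.trans (by gcongr), not_lt.mp hcon⟩
        have : |y i| ≤ K1 / K2 * |y j| := by
          rw [div_mul_eq_mul_div, le_div_iff₀ hK2]
          calc |y i| * K2 ≤ K1 * τ * K2 := by gcongr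
            _ = K1 * (K2 * τ) := by ring
            _ ≤ K1 * |y j| := by gcongr
        have : W i j * |y i| * |y j| ≤ K1 / K2 * (W i j * y j ^ 2) := by
          calc W i j * |y i| * |y j| ≤ W i j * (K1 / K2 * |y j|) * |y j| := by gcongr
            _ = K1 / K2 * (W i j * |y j| ^ 2) := by ring
            _ = _ := by rw [sq_abs]
        have : 0 ≤ K1 / K2 * (W i j * y i ^ 2) := by positivity
        linarith
  have hp2 : ∀ i j, EW i j * (u i * u j) ≤ EW i j * (y i * y j)
      + (C * d / n) * (|y i| * v j + v i * |y j|) := by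
    intro i j
    have hcn : 0 ≤ C * d / n := by positivity
    by_cases hs : |y i| ≤ K2 * τ ∧ |y j| ≤ K2 * τ
    · have h1 : u i = y i := by simp [hu, hs.1]
      have h2 : u j = y j := by simp [hu, hs.2]
      rw [h1, h2]
      have := hv0 i
      have := hv0 j
      have : 0 ≤ (C * d / n) * (|y i| * v j + v i * |y j|) := by positivity
      linarith
    · have h1 : u i * u j = 0 := by
        rw [not_and_or] at hs
        rcases hs with hs | hs <;> simp [hu, hs]
      have h2 : |y i| * |y j| ≤ |y i| * v j + v i * |y j| := by
        rw [not_and_or] at hs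
        have := hv0 i
        have := hv0 j
        rcases hs with hs | hs
        · have : v i = |y i| := by simp [hv, hs]
          rw [this]
          have : 0 ≤ |y i| * v j := by positivity
          linarith
        · have : v j = |y j| := by simp [hv, hs]
          rw [this]
          have : 0 ≤ v i * |y j| := by positivity
          linarith
      rw [h1, mul_zero]
      have h3 : -(EW i j * (y i * y j)) ≤ EW i j * (|y i| * |y j|) := by
        rw [← mul_neg]
        apply mul_le_mul_of_nonneg_left _ (hEW0 i j)
        rw [← abs_mul]; exact neg_le_abs _
      have h4 : EW i j * (|y i| * |y j|) ≤ (C * d / n) * (|y i| * |y j|) :=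
        mul_le_mul_of_nonneg_right (hEW1 i j) (by positivity)
      have h5 : (C * d / n) * (|y i| * |y j|) ≤ (C * d / n) * (|y i| * v j + v i * |y j|) :=
        mul_le_mul_of_nonneg_left h2 hcn
      linarith
  -- sum up
  have hS2 : ∑ i, ∑ j, EW i j * (u i * u j) ≤ 2 * C / K2 * d * Q := by
    have h1 : ∑ i, ∑ j, EW i j * (u i * u j) ≤ ∑ i, ∑ j, EW i j * (y i * y j)
        + (C * d / n) * (2 * ((∑ i, |y i|) * ∑ j, v j)) := by
      have : (C * d / n) * (2 * ((∑ i, |y i|) * ∑ j, v j))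
          = ∑ i, ∑ j, (C * d / n) * (|y i| * v j + v i * |y j|) := by
        simp_rw [← Finset.mul_sum, Finset.sum_add_distrib, ← Finset.mul_sum, ← Finset.sum_mul]
        ring
      rw [this, ← Finset.sum_add_distrib]
      apply Finset.sum_le_sum; intro i _
      rw [← Finset.sum_add_distrib]
      exact Finset.sum_le_sum (fun j _ => hp2 i j)
    have h2 : (∑ i, |y i|) * ∑ j, v j ≤ (n * τ) * (n * τ / K2) := by
      apply mul_le_mul hyn hvn (Finset.sum_nonneg (fun i _ => hv0 i)) (by positivity)
    have h3 : (C * d / n) * (2 * ((∑ i, |y i|) * ∑ j, v j))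
        ≤ (C * d / n) * (2 * ((n * τ) * (n * τ / K2))) := by gcongr
    have h4 : (C * d / n) * (2 * ((n * τ) * (n * τ / K2))) = 2 * C / K2 * d * Q := by
      rw [← hτ2]; field_simp
    linarith
  have hS3 : ∑ i, ∑ j, (if i ∈ B then (if j ∈ B then W i j * |y i| * |y j| else 0) else 0)
      = ∑ i ∈ B, ∑ j ∈ B, W i j * |y i| * |y j| := by
    rw [← Finset.sum_filter_add_sum_filter_not Finset.univ (· ∈ B)]
    have h2 : ∑ i with i ∉ B, ∑ j,
        (if i ∈ B then (if j ∈ B then W i j * |y i| * |y j| else 0) else 0) = 0 := by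
      apply Finset.sum_eq_zero
      intro i hi
      simp [(Finset.mem_filter.mp hi).2]
    rw [h2, add_zero]
    have h3 : Finset.univ.filter (· ∈ B) = B := by ext; simp
    rw [h3]
    apply Finset.sum_congr rfl
    intro i hi
    simp only [hi, if_true]
    rw [← Finset.sum_filter, h3]
  have hS4 : ∑ i, ∑ j, (K1 / K2) * (W i j * y i ^ 2 + W i j * y j ^ 2)
      ≤ 2 * (K1 / K2) * C' * d * Q := by
    have h1 : ∑ i, ∑ j, W i j * y i ^ 2 ≤ C' * d * Q := by
      rw [hQ, Finset.mul_sum]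
      apply Finset.sum_le_sum; intro i _
      rw [← Finset.sum_mul]
      exact mul_le_mul_of_nonneg_right (hdeg i) (sq_nonneg _)
    have h2 : ∑ i, ∑ j, W i j * y j ^ 2 = ∑ i, ∑ j, W i j * y i ^ 2 := by
      rw [Finset.sum_comm]
      apply Finset.sum_congr rfl; intro i _
      apply Finset.sum_congr rfl; intro j _
      rw [hsym]
    simp_rw [← Finset.mul_sum, Finset.sum_add_distrib]
    rw [h2]
    have : K1 / K2 * (∑ i, ∑ j, W i j * y i ^ 2 + ∑ i, ∑ j, W i j * y i ^ 2)
      ≤ K1 / K2 * (C' * d * Q + C' * d * Q) := by gcongr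
    linarith
  have hfin : ∑ i, ∑ j, W i j * (y i * y j)
      ≤ ∑ i, ∑ j, (W i j - EW i j) * (u i * u j) + ∑ i, ∑ j, EW i j * (u i * u j)
      + ∑ i, ∑ j, (if i ∈ B then (if j ∈ B then W i j * |y i| * |y j| else 0) else 0)
      + ∑ i, ∑ j, (K1 / K2) * (W i j * y i ^ 2 + W i j * y j ^ 2) := by
    simp_rw [← Finset.sum_add_distrib]
    apply Finset.sum_le_sum; intro i _
    apply Finset.sum_le_sum; intro j _
    exact hp1 i j
  rw [hS3] at hfin
  have hc2 : (K2 * τ) ^ 2 * (e * d * n) = K2 ^ 2 * e * d * Q := by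
    rw [← hτ2]; ring
  rw [hc2] at hcube
  calc _ ≤ _ := hfin
    _ ≤ K2 ^ 2 * e * d * Q + 2 * C / K2 * d * Q + (h * l + C' / l) * d * Q
        + 2 * (K1 / K2) * C' * d * Q := by
      gcongr
    _ = _ := by ring

lemma sgn_sq {n : ℕ} (σ : Fin n → Bool) (i : Fin n) : sgn σ i * sgn σ i = 1 := by
  unfold sgn; split_ifs <;> norm_num

lemma sgn_sum {n : ℕ} (σ : Fin n → Bool) (h : balanced σ) : ∑ i, sgn σ i = 0 := by
  have h1 : ∀ i, sgn σ i = 2 * (if σ i = true then 1 else 0) - 1 := by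
    intro i; unfold sgn; split_ifs <;> norm_num
  simp_rw [h1]
  rw [Finset.sum_sub_distrib, ← Finset.mul_sum, Finset.sum_boole]
  have : (2 * ((Finset.univ.filter (fun i => σ i = true)).card : ℝ)) = n := by
    exact_mod_cast h
  simp [this]

lemma lambda3_bdd {n : ℕ} (hn : 3 ≤ n) (M : Matrix (Fin n) (Fin n) ℝ) :
    BddAbove {r : ℝ | ∃ V : Submodule ℝ (Fin n → ℝ), Module.finrank ℝ V = n - 2 ∧
      ∀ x ∈ V, r * (∑ i, x i ^ 2) ≤ x ⬝ᵥ M.mulVec x} := by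
  refine ⟨∑ i, ∑ j, |M i j|, ?_⟩
  rintro r ⟨V, hV, hr⟩
  have hpos : 0 < Module.finrank ℝ V := by omega
  have hne : V ≠ ⊥ := by
    intro h
    rw [h] at hpos
    simp at hpos
  obtain ⟨x, hxV, hx0⟩ := Submodule.exists_mem_ne_zero_of_ne_bot hne
  have hQ : 0 < ∑ i, x i ^ 2 := by
    obtain ⟨i, hi⟩ := Function.ne_iff.mp hx0
    apply Finset.sum_pos' (fun i _ => sq_nonneg _)
    exact ⟨i, Finset.mem_univ _, by have : x i ≠ 0 := hi; positivity⟩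
  have h1 := hr x hxV
  have h2 : x ⬝ᵥ M.mulVec x ≤ (∑ i, ∑ j, |M i j|) * ∑ i, x i ^ 2 := by
    unfold dotProduct Matrix.mulVec dotProduct
    rw [Finset.sum_mul]
    apply Finset.sum_le_sum; intro i _
    rw [Finset.sum_mul, Finset.mul_sum]
    apply Finset.sum_le_sum; intro j _
    have a1 : x i ^ 2 ≤ ∑ i, x i ^ 2 :=
      Finset.single_le_sum (fun i _ => sq_nonneg (x i)) (Finset.mem_univ i)
    have a2 : x j ^ 2 ≤ ∑ i, x i ^ 2 :=
      Finset.single_le_sum (fun i _ => sq_nonneg (x i)) (Finset.mem_univ j)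
    have a3 : |x i * x j| ≤ ∑ i, x i ^ 2 := by
      rw [abs_le]
      constructor <;> nlinarith [sq_nonneg (x i + x j), sq_nonneg (x i - x j)]
    calc x i * (M i j * x j) = M i j * (x i * x j) := by ring
      _ ≤ |M i j * (x i * x j)| := le_abs_self _
      _ = |M i j| * |x i * x j| := abs_mul _ _
      _ ≤ _ := mul_le_mul_of_nonneg_left a3 (abs_nonneg _)
  exact le_of_mul_le_mul_right (h1.trans h2) hQ

/-- The two linear functionals defining `span{𝟙, σ}ᗮ`. -/
noncomputable def twoFun {n : ℕ} (σ : Fin n → Bool) : (Fin n → ℝ) →ₗ[ℝ] (ℝ × ℝ) where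
  toFun x := (∑ i, x i, ∑ i, sgn σ i * x i)
  map_add' x y := by
    simp [Finset.sum_add_distrib, mul_add]
  map_smul' c x := by
    simp only [Pi.smul_apply, smul_eq_mul, RingHom.id_apply, Prod.smul_mk, Prod.mk.injEq,
      Finset.mul_sum, true_and]
    apply Finset.sum_congr rfl; intro i _; ring

lemma twoFun_ker {n : ℕ} (hn : 3 ≤ n) (σ : Fin n → Bool) (hσ : balanced σ) :
    Module.finrank ℝ (LinearMap.ker (twoFun σ)) = n - 2 := by
  have hn' : (n : ℝ) ≠ 0 := by
    have : n ≠ 0 := by omega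
    exact_mod_cast this
  have hsurj : LinearMap.range (twoFun σ) = ⊤ := by
    rw [LinearMap.range_eq_top]
    rintro ⟨a, b⟩
    refine ⟨fun i => a / n + b / n * sgn σ i, ?_⟩
    simp only [twoFun, LinearMap.coe_mk, AddHom.coe_mk, Prod.mk.injEq]
    constructor
    · rw [Finset.sum_add_distrib, ← Finset.mul_sum, sgn_sum σ hσ]
      simp; field_simp
    · have : ∀ i, sgn σ i * (a / n + b / n * sgn σ i) = a / n * sgn σ i + b / n := by
        intro i
        calc _ = a / n * sgn σ i + b / n * (sgn σ i * sgn σ i) := by ring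
          _ = _ := by rw [sgn_sq, mul_one]
      simp_rw [this]
      rw [Finset.sum_add_distrib, ← Finset.mul_sum, sgn_sum σ hσ]
      simp; field_simp
  have h := LinearMap.finrank_range_add_finrank_ker (twoFun σ)
  rw [hsurj, finrank_top] at h
  simp at h
  omega

lemma PiM_mulVec {n : ℕ} (σ : Fin n → Bool) (x : Fin n → ℝ) (h1 : ∑ i, x i = 0)
    (h2 : ∑ i, sgn σ i * x i = 0) : (PiM σ).mulVec x = x := by
  unfold PiM
  rw [Matrix.sub_mulVec, Matrix.sub_mulVec, Matrix.one_mulVec, Matrix.smul_mulVec,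
    Matrix.smul_mulVec]
  have e1 : (Matrix.of (fun (_ _ : Fin n) => (1 : ℝ))).mulVec x = 0 := by
    ext i; simp [Matrix.mulVec, dotProduct, h1]
  have e2 : (outer σ).mulVec x = 0 := by
    ext i
    simp only [Matrix.mulVec, dotProduct, outer, Matrix.of_apply, mul_assoc, Pi.zero_apply]
    rw [← Finset.mul_sum, h2, mul_zero]
  rw [e1, e2]
  simp

lemma PiM_symm {n : ℕ} (σ : Fin n → Bool) : (PiM σ)ᵀ = PiM σ := by
  ext i j
  simp [PiM, outer, Matrix.one_apply, mul_comm, eq_comm]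

lemma LGamma_quad {n : ℕ} (σ : Fin n → Bool) (W : Matrix (Fin n) (Fin n) ℝ) (x : Fin n → ℝ) :
    x ⬝ᵥ (LGamma σ W).mulVec x = ∑ i, (∑ j, sgn σ i * sgn σ j * W i j) * x i ^ 2
      - ∑ i, ∑ j, W i j * ((sgn σ i * x i) * (sgn σ j * x j)) := by
  have hG : ∀ i j, GammaM σ W i j = sgn σ i * sgn σ j * W i j := by
    intro i j
    simp only [GammaM, Matrix.mul_diagonal, Matrix.diagonal_mul]
    ring
  unfold LGamma
  rw [Matrix.sub_mulVec, dotProduct_sub]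
  congr 1
  · unfold dotProduct
    apply Finset.sum_congr rfl; intro i _
    rw [Matrix.mulVec_diagonal]
    simp_rw [hG]
    ring
  · unfold dotProduct Matrix.mulVec dotProduct
    apply Finset.sum_congr rfl; intro i _
    rw [Finset.mul_sum]
    apply Finset.sum_congr rfl; intro j _
    change x i * (GammaM σ W i j * x j) = _
    rw [hG]
    ring

lemma lambda3_pos {n : ℕ} (hn : 3 ≤ n) (σ : Fin n → Bool) (hσ : balanced σ)
    (L : Matrix (Fin n) (Fin n) ℝ) (r : ℝ) (hr : 0 < r)
    (h : ∀ x : Fin n → ℝ, ∑ i, x i = 0 → ∑ i, sgn σ i * x i = 0 →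
      r * ∑ i, x i ^ 2 ≤ x ⬝ᵥ L.mulVec x) :
    0 < lambda3 (PiM σ * L * PiM σ) := by
  apply lt_of_lt_of_le hr
  apply le_csSup (lambda3_bdd hn _)
  refine ⟨LinearMap.ker (twoFun σ), twoFun_ker hn σ hσ, ?_⟩
  intro x hx
  have hx' : (∑ i, x i, ∑ i, sgn σ i * x i) = ((0, 0) : ℝ × ℝ) := hx
  have h1 : ∑ i, x i = 0 := congrArg Prod.fst hx'
  have h2 : ∑ i, sgn σ i * x i = 0 := congrArg Prod.snd hx'
  have hP := PiM_mulVec σ x h1 h2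
  have : x ⬝ᵥ (PiM σ * L * PiM σ).mulVec x = x ⬝ᵥ L.mulVec x := by
    rw [← Matrix.mulVec_mulVec, hP, ← Matrix.mulVec_mulVec, Matrix.dotProduct_mulVec,
      ← Matrix.mulVec_transpose, PiM_symm, hP]
  rw [this]
  exact h x h1 h2

/-- Pair indicator of a set. -/
noncomputable def pm {n : ℕ} (e : Finset (Fin n)) (i j : Fin n) : ℝ :=
  if i ∈ e then (if j ∈ e.erase i then 1 else 0) else 0

lemma pm_nonneg {n : ℕ} (e : Finset (Fin n)) (i j : Fin n) : 0 ≤ pm e i j := by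
  unfold pm; split_ifs <;> norm_num

lemma pm_le_one {n : ℕ} (e : Finset (Fin n)) (i j : Fin n) : pm e i j ≤ 1 := by
  unfold pm; split_ifs <;> norm_num

lemma pm_symm {n : ℕ} (e : Finset (Fin n)) (i j : Fin n) : pm e i j = pm e j i := by
  unfold pm
  simp only [Finset.mem_erase]
  by_cases h1 : i ∈ e <;> by_cases h2 : j ∈ e <;> simp [h1, h2, eq_comm]

lemma pm_diag {n : ℕ} (e : Finset (Fin n)) (i : Fin n) : pm e i i = 0 := by
  simp [pm]

lemma pm_row {n : ℕ} (e : Finset (Fin n)) (i : Fin n) (f : Fin n → ℝ) :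
    ∑ j, pm e i j * f j = if i ∈ e then ∑ j ∈ e.erase i, f j else 0 := by
  unfold pm
  split_ifs with h
  · simp only [ite_mul, one_mul, zero_mul]
    rw [← Finset.sum_filter]
    congr 1
    ext j; simp
  · simp

lemma pm_zero_of_not_mem {n : ℕ} (e : Finset (Fin n)) (i j : Fin n) (h : i ∉ e) : pm e i j = 0 := by
  simp [pm, h]

lemma pm_row_one {n k : ℕ} (e : KSet n k) (i : Fin n) :
    ∑ j, pm e.1 i j = if i ∈ e.1 then ((k - 1 : ℕ) : ℝ) else 0 := by
  have := pm_row e.1 i (fun _ => 1)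
  simp only [mul_one] at this
  rw [this]
  split_ifs with h
  · simp [Finset.card_erase_of_mem h, e.2]
  · rfl

lemma pm_total {n k : ℕ} (e : KSet n k) : ∑ i, ∑ j, pm e.1 i j = (k : ℝ) * ((k - 1 : ℕ) : ℝ) := by
  simp_rw [pm_row_one]
  rw [← Finset.sum_filter, Finset.sum_const, nsmul_eq_mul]
  congr 2
  have : Finset.univ.filter (fun i => i ∈ e.1) = e.1 := by ext; simp
  rw [this, e.2]

lemma Wmat_eq {n k : ℕ} (E : KSet n k → Bool) (i j : Fin n) :
    Wmat E i j = ∑ e : KSet n k, pm e.1 i j * ind (E e) := by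
  unfold Wmat
  simp only [Matrix.of_apply]
  split_ifs with h
  · subst h; simp [pm_diag]
  · rw [Finset.card_filter]
    push_cast
    apply Finset.sum_congr rfl
    intro e _
    unfold pm ind
    by_cases h1 : i ∈ e.1 <;> by_cases h2 : j ∈ e.1 <;> by_cases h3 : E e = true <;>
      simp [h1, h2, h3, Ne.symm h]

lemma sum_KSet {n k : ℕ} (f : Finset (Fin n) → ℝ) :
    ∑ e : KSet n k, f e.1 = ∑ e ∈ Finset.powersetCard k (Finset.univ : Finset (Fin n)), f e := by
  symm
  apply Finset.sum_subtype
  intro x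
  simp [Finset.mem_powersetCard]

lemma sum_containing {n K : ℕ} (S : Finset (Fin n)) (i : Fin n) (hi : i ∈ S)
    (f : Finset (Fin n) → ℝ) :
    ∑ e ∈ Finset.powersetCard (K + 1) S, (if i ∈ e then f e else 0)
      = ∑ T ∈ Finset.powersetCard K (S.erase i), f (insert i T) := by
  have hS : S = insert i (S.erase i) := (Finset.insert_erase hi).symm
  have hni : i ∉ S.erase i := Finset.notMem_erase i S
  have hT : ∀ (r : ℕ), ∀ T ∈ Finset.powersetCard r (S.erase i), i ∉ T := by
    intro r T hT h
    exact hni ((Finset.mem_powersetCard.mp hT).1 h)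
  conv_lhs => rw [hS]
  rw [Finset.powersetCard_succ_insert hni, Finset.sum_union, Finset.sum_image]
  · rw [Finset.sum_eq_zero, zero_add]
    · apply Finset.sum_congr rfl
      intro T _
      simp
    · intro T h
      rw [if_neg (hT _ T h)]
  · intro A hA B hB hAB
    have h1 := hT _ A hA
    have h2 := hT _ B hB
    rw [← Finset.erase_insert h1, ← Finset.erase_insert h2, hAB]
  · rw [Finset.disjoint_left]
    intro A hA hB
    obtain ⟨B, _, rfl⟩ := Finset.mem_image.mp hB
    exact hT _ _ hA (Finset.mem_insert_self i B)

lemma count_one {n K : ℕ} (S : Finset (Fin n)) (i : Fin n) (hi : i ∈ S) :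
    ∑ e ∈ Finset.powersetCard (K + 1) S, (if i ∈ e then (1:ℝ) else 0)
      = ((S.card - 1).choose K : ℝ) := by
  rw [sum_containing S i hi]
  simp [Finset.card_erase_of_mem hi]

lemma count_two {n K : ℕ} (S : Finset (Fin n)) (i j : Fin n) (hi : i ∈ S) (hj : j ∈ S)
    (hij : i ≠ j) :
    ∑ e ∈ Finset.powersetCard (K + 2) S, pm e i j = ((S.card - 2).choose K : ℝ) := by
  unfold pm
  rw [sum_containing S i hi (fun e => if j ∈ e.erase i then 1 else 0)]
  have : ∀ T ∈ Finset.powersetCard (K + 1) (S.erase i),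
      (if j ∈ (insert i T).erase i then (1:ℝ) else 0) = if j ∈ T then 1 else 0 := by
    intro T _
    simp [Finset.mem_erase, Ne.symm hij]
  rw [Finset.sum_congr rfl this, count_one (S.erase i) j (Finset.mem_erase.mpr ⟨hij.symm, hj⟩),
    Finset.card_erase_of_mem hi]
  rfl

lemma esymm_le {n : ℕ} (z : Fin n → ℝ) (hz : ∀ i, 0 ≤ z i) (S : Finset (Fin n)) :
    ∀ K : ℕ, ∑ T ∈ Finset.powersetCard K S, ∏ j ∈ T, z j ≤ (∑ j ∈ S, z j) ^ K / (K.factorial : ℝ) := by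
  induction S using Finset.induction_on with
  | empty =>
    intro K
    cases K with
    | zero => simp
    | succ K =>
      rw [Finset.powersetCard_eq_empty.mpr (by simp)]
      simp
  | insert a s ha ih =>
    intro K
    cases K with
    | zero => simp
    | succ K =>
      rw [Finset.sum_insert ha, ← Finset.sum_filter_add_sum_filter_not _ (fun T => a ∈ T)]
      rw [Finset.sum_filter, sum_containing (insert a s) a (Finset.mem_insert_self a s)
        (fun T => ∏ j ∈ T, z j), Finset.erase_insert ha]
      have h1 : ∑ T ∈ Finset.powersetCard K s, ∏ j ∈ insert a T, z j
          = z a * ∑ T ∈ Finset.powersetCard K s, ∏ j ∈ T, z j := by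
        rw [Finset.mul_sum]
        apply Finset.sum_congr rfl
        intro T hT
        rw [Finset.prod_insert]
        intro h
        exact ha ((Finset.mem_powersetCard.mp hT).1 h)
      have h2 : (Finset.powersetCard (K + 1) (insert a s)).filter (fun T => a ∉ T)
          = Finset.powersetCard (K + 1) s := by
        ext T
        simp only [Finset.mem_filter, Finset.mem_powersetCard]
        constructor
        · rintro ⟨⟨h1, h2⟩, h3⟩
          exact ⟨(Finset.subset_insert_iff_of_notMem h3).mp h1, h2⟩
        · rintro ⟨h1, h2⟩
          exact ⟨⟨h1.trans (Finset.subset_insert a s), h2⟩, fun h => ha (h1 h)⟩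
      rw [h1, h2]
      set A := ∑ j ∈ s, z j with hA
      have hA0 : 0 ≤ A := Finset.sum_nonneg (fun j _ => hz j)
      have hza := hz a
      have i1 := mul_le_mul_of_nonneg_left (ih K) hza
      have i2 := ih (K + 1)
      have i3 : A ^ (K + 1) + (K + 1) * A ^ K * z a ≤ (z a + A) ^ (K + 1) := by
        have := pow_add_mul_le_add_pow (a := A) (b := z a) hA0 (by positivity) (K + 1)
        simp only [Nat.add_sub_cancel] at this
        push_cast at this
        rw [add_comm (z a) A]
        linarith
      calc _ ≤ z a * (A ^ K / (K.factorial : ℝ)) + A ^ (K + 1) / ((K + 1).factorial : ℝ) := by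
            linarith
        _ = (A ^ (K + 1) + (K + 1) * A ^ K * z a) / ((K + 1).factorial : ℝ) := by
            rw [Nat.factorial_succ]
            push_cast
            field_simp
            ring
        _ ≤ _ := by gcongr

/-- The cluster of `i`. -/
noncomputable def clus {n : ℕ} (σ : Fin n → Bool) (i : Fin n) : Finset (Fin n) :=
  Finset.univ.filter (fun j => σ j = σ i)

lemma clus_card {m : ℕ} (σ : Fin (2 * m) → Bool) (h : balanced σ) (i : Fin (2 * m)) :
    (clus σ i).card = m := by
  have h1 : (Finset.univ.filter (fun j => σ j = true)).card = m := by
    unfold balanced at h; omega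
  have h2 := Finset.card_filter_add_card_filter_not (s := (Finset.univ : Finset (Fin (2 * m))))
    (fun j => σ j = true)
  rw [Finset.card_univ, Fintype.card_fin] at h2
  unfold clus
  cases hi : σ i with
  | true => exact h1
  | false =>
    simp only [Bool.not_eq_true] at h2
    omega

lemma edgeP_eq {n : ℕ} (p q : ℝ) (σ : Fin n → Bool) (e : Finset (Fin n)) :
    edgeP p q σ e = q + (if inCluster σ e then (p - q) else 0) := by
  unfold edgeP; split_ifs <;> ring

lemma edgeP_le {n : ℕ} (p q : ℝ) (hpq : q ≤ p) (σ : Fin n → Bool) (e : Finset (Fin n)) :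
    edgeP p q σ e ≤ p := by
  unfold edgeP; split_ifs <;> linarith

lemma edgeP_nonneg {n : ℕ} (p q : ℝ) (hq : 0 ≤ q) (hpq : q ≤ p) (σ : Fin n → Bool)
    (e : Finset (Fin n)) : 0 ≤ edgeP p q σ e := by
  unfold edgeP; split_ifs <;> linarith

lemma sum_inCluster {n k : ℕ} (σ : Fin n → Bool) (i : Fin n) (g : Finset (Fin n) → ℝ)
    (hg : ∀ e, i ∉ e → g e = 0) :
    ∑ e : KSet n k, (if inCluster σ e.1 then g e.1 else 0)
      = ∑ e ∈ Finset.powersetCard k (clus σ i), g e := by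
  rw [sum_KSet (fun e => if inCluster σ e then g e else 0)]
  symm
  rw [← Finset.sum_subset (Finset.powersetCard_mono (Finset.subset_univ (clus σ i)))]
  · apply Finset.sum_congr rfl
    intro e he
    rw [if_pos]
    intro a ha b hb
    have hsub := (Finset.mem_powersetCard.mp he).1
    have h1 := (Finset.mem_filter.mp (hsub ha)).2
    have h2 := (Finset.mem_filter.mp (hsub hb)).2
    rw [h1, h2]
  · intro e he hne
    split_ifs with hc
    · apply hg
      intro hi
      apply hne
      rw [Finset.mem_powersetCard] at he ⊢
      refine ⟨?_, he.2⟩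
      intro a ha
      exact Finset.mem_filter.mpr ⟨Finset.mem_univ _, hc a ha i hi⟩
    · rfl

lemma mem_clus {n : ℕ} (σ : Fin n → Bool) (i : Fin n) : i ∈ clus σ i := by
  simp [clus]

lemma sum_deg_le {n K : ℕ} (p q : ℝ) (hpq : q ≤ p) (σ : Fin n → Bool) (i : Fin n) :
    ∑ e : KSet n (K + 1), (if i ∈ e.1 then edgeP p q σ e.1 else 0) ≤ p * ((n - 1).choose K : ℝ) := by
  have h1 : ∑ e : KSet n (K + 1), (if i ∈ e.1 then edgeP p q σ e.1 else 0)
      ≤ ∑ e : KSet n (K + 1), p * (if i ∈ e.1 then (1:ℝ) else 0) := by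
    apply Finset.sum_le_sum
    intro e _
    split_ifs
    · simpa using edgeP_le p q hpq σ e.1
    · simp
  refine h1.trans (le_of_eq ?_)
  rw [← Finset.mul_sum, sum_KSet (fun e => if i ∈ e then (1:ℝ) else 0),
    count_one _ i (Finset.mem_univ i)]
  simp

/-- Expected weighted adjacency. -/
noncomputable def EWf {n k : ℕ} (p q : ℝ) (σ : Fin n → Bool) (i j : Fin n) : ℝ :=
  ∑ e : KSet n k, pm e.1 i j * edgeP p q σ e.1

lemma EWf_nonneg {n k : ℕ} (p q : ℝ) (hq : 0 ≤ q) (hpq : q ≤ p) (σ : Fin n → Bool) (i j : Fin n) :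
    0 ≤ EWf (k := k) p q σ i j :=
  Finset.sum_nonneg (fun e _ => mul_nonneg (pm_nonneg _ _ _) (edgeP_nonneg p q hq hpq σ e.1))

lemma EWf_le {n K : ℕ} (p q : ℝ) (hp : 0 ≤ p) (hpq : q ≤ p) (σ : Fin n → Bool) (i j : Fin n) :
    EWf (k := K + 2) p q σ i j ≤ p * ((n - 2).choose K : ℝ) := by
  by_cases hij : i = j
  · subst hij
    simp only [EWf, pm_diag, zero_mul, Finset.sum_const_zero]
    positivity
  have h1 : EWf (k := K + 2) p q σ i j ≤ ∑ e : KSet n (K + 2), p * pm e.1 i j := by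
    apply Finset.sum_le_sum
    intro e _
    rw [mul_comm p]
    exact mul_le_mul_of_nonneg_left (edgeP_le p q hpq σ e.1) (pm_nonneg _ _ _)
  refine h1.trans (le_of_eq ?_)
  rw [← Finset.mul_sum, sum_KSet (fun e => pm e i j),
    count_two _ i j (Finset.mem_univ i) (Finset.mem_univ j) hij]
  simp

lemma EWf_eq {m K : ℕ} (p q : ℝ) (σ : Fin (2 * m) → Bool) (h : balanced σ) (i j : Fin (2 * m))
    (hij : i ≠ j) :
    EWf (k := K + 2) p q σ i j = q * ((2 * m - 2).choose K : ℝ)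
      + (p - q) * ((m - 2).choose K : ℝ) * ((1 + sgn σ i * sgn σ j) / 2) := by
  unfold EWf
  have h1 : ∀ e : KSet (2 * m) (K + 2), pm e.1 i j * edgeP p q σ e.1
      = q * pm e.1 i j + (p - q) * (if inCluster σ e.1 then pm e.1 i j else 0) := by
    intro e
    rw [edgeP_eq]
    split_ifs <;> ring
  rw [Finset.sum_congr rfl (fun e _ => h1 e), Finset.sum_add_distrib, ← Finset.mul_sum,
    ← Finset.mul_sum, sum_KSet (fun e => pm e i j),
    count_two _ i j (Finset.mem_univ i) (Finset.mem_univ j) hij,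
    sum_inCluster σ i (fun e => pm e i j) (fun e he => pm_zero_of_not_mem e i j he)]
  rw [Finset.card_univ, Fintype.card_fin, mul_assoc]
  congr 2
  by_cases hs : σ j = σ i
  · rw [count_two _ i j (mem_clus σ i) (by simp [clus, hs]) hij, clus_card σ h]
    have : sgn σ j = sgn σ i := by simp [sgn, hs]
    rw [this, sgn_sq]
    norm_num
  · have h2 : sgn σ i * sgn σ j = -1 := by
      unfold sgn
      cases h1 : σ i <;> cases h2 : σ j <;> simp_all
    rw [h2]
    rw [Finset.sum_eq_zero]
    · norm_num
    · intro e he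
      have hsub := (Finset.mem_powersetCard.mp he).1
      rw [pm_symm]
      apply pm_zero_of_not_mem
      intro hj
      exact hs (Finset.mem_filter.mp (hsub hj)).2

lemma EWf_quad {m K : ℕ} (p q : ℝ) (hq : 0 ≤ q) (hpq : q ≤ p) (σ : Fin (2 * m) → Bool)
    (h : balanced σ) (y : Fin (2 * m) → ℝ) (h1 : ∑ i, y i = 0) (h2 : ∑ i, sgn σ i * y i = 0) :
    ∑ i, ∑ j, EWf (k := K + 2) p q σ i j * (y i * y j) ≤ 0 := by
  set a := q * ((2 * m - 2).choose K : ℝ) with ha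
  set b := (p - q) * ((m - 2).choose K : ℝ) with hb
  have ha0 : 0 ≤ a := by positivity
  have hb0 : 0 ≤ b := mul_nonneg (by linarith) (by positivity)
  have hle : ∀ i j, EWf (k := K + 2) p q σ i j * (y i * y j)
      ≤ (a + b / 2) * (y i * y j) + b / 2 * ((sgn σ i * y i) * (sgn σ j * y j)) := by
    intro i j
    by_cases hij : i = j
    · subst hij
      have : EWf (k := K + 2) p q σ i i = 0 := by simp [EWf, pm_diag]
      rw [this, zero_mul]
      have e1 := mul_self_nonneg (y i)
      have e2 := mul_self_nonneg (sgn σ i * y i)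
      positivity
    · rw [EWf_eq p q σ h i j hij]
      apply le_of_eq
      ring
  refine (Finset.sum_le_sum (fun i _ => Finset.sum_le_sum (fun j _ => hle i j))).trans
    (le_of_eq ?_)
  simp_rw [Finset.sum_add_distrib, ← Finset.mul_sum, ← Finset.sum_mul, h1, h2]
  simp

/-- Signed degree contribution of an edge. -/
noncomputable def cst {n : ℕ} (σ : Fin n → Bool) (i : Fin n) (e : Finset (Fin n)) : ℝ :=
  ∑ j, pm e i j * (sgn σ i * sgn σ j)

lemma sum_exp_diag {m K : ℕ} (p q θ : ℝ) (hq : 0 ≤ q) (σ : Fin (2 * m) → Bool)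
    (h : balanced σ) (i : Fin (2 * m)) :
    ∑ e : KSet (2 * m) (K + 1), edgeP p q σ e.1 * (Real.exp (-θ * cst σ i e.1) - 1)
      ≤ q * (((2 * m : ℕ) * Real.cosh θ) ^ K / (K.factorial : ℝ) - ((2 * m - 1).choose K : ℝ))
        + (p - q) * ((m - 1).choose K : ℝ) * (Real.exp (-θ * K) - 1) := by
  have hc0 : ∀ e, i ∉ e → Real.exp (-θ * cst σ i e) - 1 = 0 := by
    intro e he
    have : cst σ i e = 0 := by simp [cst, pm_zero_of_not_mem e i _ he]
    simp [this]
  have hc1 : ∀ (e : Finset (Fin (2 * m))), i ∈ e →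
      cst σ i e = ∑ j ∈ e.erase i, sgn σ i * sgn σ j := by
    intro e he
    unfold cst
    rw [pm_row e i (fun j => sgn σ i * sgn σ j), if_pos he]
  have h1 : ∀ e : KSet (2 * m) (K + 1),
      edgeP p q σ e.1 * (Real.exp (-θ * cst σ i e.1) - 1)
      = q * (Real.exp (-θ * cst σ i e.1) - 1)
        + (p - q) * (if inCluster σ e.1 then (Real.exp (-θ * cst σ i e.1) - 1) else 0) := by
    intro e
    rw [edgeP_eq]
    split_ifs <;> ring
  rw [Finset.sum_congr rfl (fun e _ => h1 e), Finset.sum_add_distrib, ← Finset.mul_sum,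
    ← Finset.mul_sum, sum_KSet (fun e => Real.exp (-θ * cst σ i e) - 1),
    sum_inCluster σ i (fun e => Real.exp (-θ * cst σ i e) - 1) hc0, mul_assoc]
  apply add_le_add
  · apply mul_le_mul_of_nonneg_left _ hq
    have e1 : ∀ e ∈ Finset.powersetCard (K + 1) (Finset.univ : Finset (Fin (2 * m))),
        Real.exp (-θ * cst σ i e) - 1
        = if i ∈ e then (Real.exp (-θ * cst σ i e) - 1) else 0 := by
      intro e _
      split_ifs with hi
      · rfl
      · exact hc0 e hi
    rw [Finset.sum_congr rfl e1, sum_containing _ i (Finset.mem_univ i)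
      (fun e => Real.exp (-θ * cst σ i e) - 1), Finset.sum_sub_distrib]
    have e2 : ∑ T ∈ Finset.powersetCard K ((Finset.univ : Finset (Fin (2 * m))).erase i), (1:ℝ)
        = ((2 * m - 1).choose K : ℝ) := by
      simp [Finset.card_erase_of_mem]
    rw [e2]
    apply sub_le_sub_right
    set z : Fin (2 * m) → ℝ := fun j => Real.exp (-θ * (sgn σ i * sgn σ j)) with hz
    have e3 : ∀ T ∈ Finset.powersetCard K ((Finset.univ : Finset (Fin (2 * m))).erase i),
        Real.exp (-θ * cst σ i (insert i T)) = ∏ j ∈ T, z j := by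
      intro T hT
      have hiT : i ∉ T := fun h => Finset.notMem_erase i _ ((Finset.mem_powersetCard.mp hT).1 h)
      rw [hc1 _ (Finset.mem_insert_self i T), Finset.erase_insert hiT, Finset.mul_sum,
        Real.exp_sum]
    rw [Finset.sum_congr rfl e3]
    have hz0 : ∀ j, 0 ≤ z j := fun j => (Real.exp_pos _).le
    refine (esymm_le z hz0 _ K).trans ?_
    have e4 : ∑ j ∈ (Finset.univ : Finset (Fin (2 * m))).erase i, z j
        ≤ (2 * m : ℕ) * Real.cosh θ := by
      have e5 : ∀ j, z j = Real.cosh θ - (Real.sinh θ * sgn σ i) * sgn σ j := by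
        intro j
        simp only [hz, Real.cosh_eq, Real.sinh_eq, sgn]
        split_ifs <;> ring_nf
      have e6 : ∑ j, z j = (2 * m : ℕ) * Real.cosh θ := by
        simp_rw [e5]
        rw [Finset.sum_sub_distrib, ← Finset.mul_sum, sgn_sum σ h]
        simp
      rw [← e6]
      exact Finset.sum_le_univ_sum_of_nonneg hz0
    have e7 : 0 ≤ ∑ j ∈ (Finset.univ : Finset (Fin (2 * m))).erase i, z j :=
      Finset.sum_nonneg (fun j _ => hz0 j)
    gcongr
  · apply le_of_eq
    congr 1
    have e1 : ∀ e ∈ Finset.powersetCard (K + 1) (clus σ i),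
        Real.exp (-θ * cst σ i e) - 1
        = (if i ∈ e then (1:ℝ) else 0) * (Real.exp (-θ * K) - 1) := by
      intro e he
      split_ifs with hi
      · rw [one_mul, hc1 e hi]
        have hs : ∀ j ∈ e.erase i, sgn σ i * sgn σ j = 1 := by
          intro j hj
          have : σ j = σ i :=
            (Finset.mem_filter.mp ((Finset.mem_powersetCard.mp he).1 (Finset.mem_of_mem_erase hj))).2
          have : sgn σ j = sgn σ i := by simp [sgn, this]
          rw [this, sgn_sq]
        rw [Finset.sum_congr rfl hs]
        simp [Finset.card_erase_of_mem hi, (Finset.mem_powersetCard.mp he).2]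
      · rw [zero_mul]; exact hc0 e hi
    rw [Finset.sum_congr rfl e1, ← Finset.sum_mul, count_one _ i (mem_clus σ i), clus_card σ h]

lemma exp_neg_le_quad (t : ℝ) (ht : 0 ≤ t) : Real.exp (-t) ≤ 1 - t + t ^ 2 / 2 := by
  have h1 := Real.quadratic_le_exp_of_nonneg ht
  rw [Real.exp_neg, inv_le_iff_one_le_mul₀ (Real.exp_pos t)]
  have h2 : 0 < 1 - t + t ^ 2 / 2 := by nlinarith [sq_nonneg (t - 1)]
  have h3 : (1 - t + t ^ 2 / 2) * (1 + t + t ^ 2 / 2) = 1 + t ^ 4 / 4 := by ring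
  have h4 : (1 - t + t ^ 2 / 2) * (1 + t + t ^ 2 / 2) ≤ (1 - t + t ^ 2 / 2) * Real.exp t :=
    mul_le_mul_of_nonneg_left h1 h2.le
  have : 0 ≤ t ^ 4 := by positivity
  linarith

lemma exists_theta (K : ℕ) (hK : 1 ≤ K) (D β : ℝ) (hD : 0 < D) (hβ : 0 < β)
    (hc : 4 * β + 2 * (K + 1) * D < K * D ^ 2) :
    ∃ θ : ℝ, 0 < θ ∧ β * (Real.cosh θ ^ K - 1) + D * (Real.exp (-θ * K) - 1) < -1 := by
  have hK' : (1:ℝ) ≤ K := by exact_mod_cast hK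
  have hK0 : (0:ℝ) < K := by linarith
  have hD2 : 2 < D := by
    have : 2 * (K + 1) * D < K * D * D := by nlinarith
    have : 2 * ((K:ℝ) + 1) < K * D := lt_of_mul_lt_mul_right this hD.le
    by_contra hcon
    nlinarith
  set u := 1 / D with hu
  have hu0 : 0 < u := by positivity
  have hu2 : u < 1 / 2 := by
    rw [hu]; exact one_div_lt_one_div_of_lt (by norm_num) hD2
  have hDu : D * u = 1 := by rw [hu]; field_simp
  refine ⟨2 * u / K, by positivity, ?_⟩
  set s := 2 * u ^ 2 / K with hs
  have hs0 : 0 < s := by positivity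
  have hs1 : s ≤ 2 * u ^ 2 := by
    rw [hs]; exact div_le_self (by positivity) hK'
  have hs2 : s ≤ 1 := by nlinarith
  have h1 : Real.cosh (2 * u / K) ^ K ≤ Real.exp s := by
    calc Real.cosh (2 * u / K) ^ K ≤ Real.exp ((2 * u / K) ^ 2 / 2) ^ K := by
          apply pow_le_pow_left₀ (Real.cosh_pos _).le (Real.cosh_le_exp_half_sq _)
      _ = Real.exp s := by
          rw [← Real.exp_nat_mul]
          congr 1
          rw [hs]; field_simp
  have h2 : Real.exp s ≤ 1 + s + s ^ 2 := by
    have := Real.abs_exp_sub_one_sub_id_le (x := s) (by rw [abs_of_pos hs0]; exact hs2)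
    have := (abs_le.mp this).2
    linarith
  have h3 : Real.exp (-(2 * u / K) * K) ≤ 1 - 2 * u + 2 * u ^ 2 := by
    have : -(2 * u / K) * K = -(2 * u) := by field_simp
    rw [this]
    have := exp_neg_le_quad (2 * u) (by positivity)
    linarith [this]
  have h4 : β * s < 1 / 2 * (1 - 2 * u) := by
    have e1 : β < (K * D ^ 2 - 2 * (K + 1) * D) / 4 := by linarith
    have e2 : β * s < (K * D ^ 2 - 2 * (K + 1) * D) / 4 * s := mul_lt_mul_of_pos_right e1 hs0
    have e3 : (K * D ^ 2 - 2 * (K + 1) * D) / 4 * s = 1 / 2 * (1 - 2 * u) - u / K := by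
      rw [hs, hu]; field_simp; ring
    have : 0 < u / K := by positivity
    linarith
  have h5 : β * (Real.cosh (2 * u / K) ^ K - 1) ≤ β * s * (1 + 2 * u ^ 2) := by
    calc β * (Real.cosh (2 * u / K) ^ K - 1) ≤ β * (s + s ^ 2) := by
          apply mul_le_mul_of_nonneg_left _ hβ.le; linarith
      _ = β * s * (1 + s) := by ring
      _ ≤ _ := by
          apply mul_le_mul_of_nonneg_left _ (by positivity); linarith
  have h6 : β * s * (1 + 2 * u ^ 2) < 1 / 2 * (1 - 2 * u) * (1 + 2 * u ^ 2) :=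
    mul_lt_mul_of_pos_right h4 (by positivity)
  have h7 : D * (Real.exp (-(2 * u / K) * K) - 1) ≤ -2 + 2 * u := by
    calc D * (Real.exp (-(2 * u / K) * K) - 1) ≤ D * (- 2 * u + 2 * u ^ 2) := by
          apply mul_le_mul_of_nonneg_left _ hD.le; linarith
      _ = (D * u) * (-2 + 2 * u) := by ring
      _ = _ := by rw [hDu, one_mul]
  have h8 : 0 < (1 / 2 - u) * (1 - 2 * u ^ 2) := by
    apply mul_pos (by linarith)
    nlinarith
  nlinarith

lemma choose_ratio (K : ℕ) :
    Tendsto (fun N : ℕ => ((N - 1).choose K : ℝ) * (K.factorial : ℝ) / (N : ℝ) ^ K) atTop (nhds 1) := by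
  have h1 := isEquivalent_choose K
  rw [Asymptotics.isEquivalent_iff_tendsto_one] at h1
  · have h2 : Tendsto (fun N : ℕ => ((N - 1 : ℕ) : ℝ) / (N : ℝ)) atTop (nhds 1) := by
      have : Tendsto (fun N : ℕ => 1 - 1 / (N : ℝ)) atTop (nhds (1 - 0)) :=
        tendsto_const_nhds.sub tendsto_one_div_atTop_nhds_zero_nat
      rw [sub_zero] at this
      refine this.congr' ?_
      filter_upwards [eventually_ge_atTop 1] with N hN
      have : (N : ℝ) ≠ 0 := by
        have : N ≠ 0 := by omega
        exact_mod_cast this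
      rw [Nat.cast_sub hN]
      field_simp
      simp
    have h3 := (h1.comp (tendsto_sub_atTop_nat 1)).mul (h2.pow K)
    simp only [one_pow, mul_one] at h3
    refine h3.congr' ?_
    filter_upwards [eventually_ge_atTop 2] with N hN
    have a1 : (N : ℝ) ≠ 0 := by
      have : N ≠ 0 := by omega
      exact_mod_cast this
    have a2 : ((N - 1 : ℕ) : ℝ) ≠ 0 := by
      have : N - 1 ≠ 0 := by omega
      exact_mod_cast this
    simp only [Function.comp, Pi.div_apply]
    rw [div_pow]
    field_simp
  · filter_upwards [eventually_ge_atTop 1] with N hN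
    have a1 : (N : ℝ) ≠ 0 := by
      have : N ≠ 0 := by omega
      exact_mod_cast this
    positivity

lemma diag_limit (K : ℕ) (α β θ : ℝ) :
    Tendsto (fun m : ℕ =>
      β * (((2 * m : ℕ) * Real.cosh θ) ^ K / (K.factorial : ℝ) / ((2 * m - 1).choose K : ℝ) - 1)
      + (α - β) * (((m - 1).choose K : ℝ) / ((2 * m - 1).choose K : ℝ)) * (Real.exp (-θ * K) - 1))
      atTop (nhds (β * (Real.cosh θ ^ K - 1) + (α - β) / 2 ^ K * (Real.exp (-θ * K) - 1))) := by
  have h2m : Tendsto (fun m : ℕ => 2 * m) atTop atTop :=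
    tendsto_id.const_mul_atTop' (by norm_num)
  have hR := choose_ratio K
  have hR2 := hR.comp h2m
  have hRi : Tendsto (fun m : ℕ => Real.cosh θ ^ K * (((fun N : ℕ => ((N - 1).choose K : ℝ)
      * (K.factorial : ℝ) / (N : ℝ) ^ K) ∘ (fun m : ℕ => 2 * m)) m)⁻¹) atTop
      (nhds (Real.cosh θ ^ K * 1⁻¹)) := (hR2.inv₀ one_ne_zero).const_mul _
  have hRr := ((hR.div hR2 one_ne_zero).div_const ((2:ℝ) ^ K))
  rw [inv_one, mul_one] at hRi
  rw [div_one] at hRr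
  have hlim := ((hRi.sub_const 1).const_mul β).add
    ((hRr.const_mul (α - β)).mul_const (Real.exp (-θ * K) - 1))
  have e : (α - β) * (1 / 2 ^ K) = (α - β) / 2 ^ K := by ring
  rw [e] at hlim
  refine hlim.congr' ?_
  filter_upwards [eventually_ge_atTop 1, eventually_ge_atTop (K + 1)] with m hm hmK
  have a1 : (m : ℝ) ≠ 0 := by
    have : m ≠ 0 := by omega
    exact_mod_cast this
  have a2 : ((2 * m - 1).choose K : ℝ) ≠ 0 := by
    have : (2 * m - 1).choose K ≠ 0 := (Nat.choose_pos (by omega)).ne'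
    exact_mod_cast this
  have a3 : (K.factorial : ℝ) ≠ 0 := by positivity
  have b1 : Real.cosh θ ^ K * (((2 * m - 1).choose K : ℝ) * (K.factorial : ℝ)
      / ((2 * m : ℕ) : ℝ) ^ K)⁻¹
      = ((2 * m : ℕ) * Real.cosh θ) ^ K / (K.factorial : ℝ) / ((2 * m - 1).choose K : ℝ) := by
    rw [mul_pow]; field_simp
  have b2 : (((m - 1).choose K : ℝ) * (K.factorial : ℝ) / (m : ℝ) ^ K)
      / (((2 * m - 1).choose K : ℝ) * (K.factorial : ℝ) / ((2 * m : ℕ) : ℝ) ^ K) / 2 ^ K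
      = ((m - 1).choose K : ℝ) / ((2 * m - 1).choose K : ℝ) := by
    push_cast
    rw [mul_pow]; field_simp
  simp only [Function.comp, Pi.div_apply]
  rw [b1, b2]

lemma sum_swap3 {ι : Type*} [Fintype ι] {n : ℕ} (f : ι → Fin n → Fin n → ℝ) (g : ι → ℝ)
    (c : Fin n → Fin n → ℝ) :
    ∑ i, ∑ j, (∑ e, f e i j * g e) * c i j = ∑ e, (∑ i, ∑ j, f e i j * c i j) * g e := by
  simp only [Finset.sum_mul]
  rw [Finset.sum_comm (s := (Finset.univ : Finset ι))]
  refine Finset.sum_congr rfl fun i _ => ?_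
  rw [Finset.sum_comm]
  refine Finset.sum_congr rfl fun e _ => Finset.sum_congr rfl fun j _ => ?_
  ring

lemma sum_W_weight {n k : ℕ} (E : KSet n k → Bool) (c : Fin n → Fin n → ℝ) :
    ∑ i, ∑ j, Wmat E i j * c i j
      = ∑ e : KSet n k, (∑ i, ∑ j, pm e.1 i j * c i j) * ind (E e) := by
  simp only [Wmat_eq]
  exact sum_swap3 (fun (e : KSet n k) i j => pm e.1 i j) (fun e => ind (E e)) c

lemma sum_EW_weight {n k : ℕ} (p q : ℝ) (σ : Fin n → Bool) (c : Fin n → Fin n → ℝ) :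
    ∑ i, ∑ j, EWf (k := k) p q σ i j * c i j
      = ∑ e : KSet n k, (∑ i, ∑ j, pm e.1 i j * c i j) * edgeP p q σ e.1 :=
  sum_swap3 (fun (e : KSet n k) i j => pm e.1 i j) (fun e => edgeP p q σ e.1) c

lemma ev_deg {n K : ℕ} (p q : ℝ) (hq : 0 ≤ q) (hpq : q ≤ p) (hp : p ≤ 1) (σ : Fin n → Bool)
    (t : ℝ) :
    PrB (fun e : KSet n (K + 1) => edgeP p q σ e.1)
      (fun E => ∃ i ∈ (Finset.univ : Finset (Fin n)), t < ∑ j, Wmat E i j)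
      ≤ n * Real.exp (-t + p * ((n - 1).choose K : ℝ) * (Real.exp K - 1)) := by
  have h0 : ∀ e : KSet n (K + 1), 0 ≤ edgeP p q σ e.1 := fun e => edgeP_nonneg p q hq hpq σ e.1
  have h1 : ∀ e : KSet n (K + 1), edgeP p q σ e.1 ≤ 1 := fun e =>
    (edgeP_le p q hpq σ e.1).trans hp
  refine (PrB_union h0 h1 _ _).trans ?_
  have : ∀ i ∈ (Finset.univ : Finset (Fin n)),
      PrB (fun e : KSet n (K + 1) => edgeP p q σ e.1) (fun E => t < ∑ j, Wmat E i j)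
      ≤ Real.exp (-t + p * ((n - 1).choose K : ℝ) * (Real.exp K - 1)) := by
    intro i _
    have hc := PrB_chernoff h0 h1 (fun e => if i ∈ e.1 then (K : ℝ) else 0) t
    refine (PrB_mono h0 h1 ?_).trans (hc.trans (Real.exp_le_exp.mpr ?_))
    · intro E hE
      refine hE.le.trans (le_of_eq ?_)
      simp only [Wmat_eq]
      rw [Finset.sum_comm]
      refine Finset.sum_congr rfl fun e _ => ?_
      rw [← Finset.sum_mul, pm_row_one]
      simp
    · have h2 := sum_deg_le (K := K) p q hpq σ i
      have h3 : ∑ e : KSet n (K + 1), edgeP p q σ e.1 *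
          (Real.exp (if i ∈ e.1 then (K : ℝ) else 0) - 1)
          = (∑ e : KSet n (K + 1), (if i ∈ e.1 then edgeP p q σ e.1 else 0)) * (Real.exp K - 1) := by
        rw [Finset.sum_mul]
        refine Finset.sum_congr rfl fun e _ => ?_
        split_ifs <;> simp
      have h4 : 0 ≤ Real.exp K - 1 := by
        have := Real.one_le_exp (x := (K : ℝ)) (by positivity)
        linarith
      rw [h3]
      have := mul_le_mul_of_nonneg_right h2 h4
      linarith
  refine (Finset.sum_le_sum this).trans ?_
  simp

lemma ev_diag {m K : ℕ} (p q θ : ℝ) (hq : 0 ≤ q) (hpq : q ≤ p) (hp : p ≤ 1) (hθ : 0 < θ)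
    (σ : Fin (2 * m) → Bool) (hσ : balanced σ) (t : ℝ) :
    PrB (fun e : KSet (2 * m) (K + 1) => edgeP p q σ e.1)
      (fun E => ∃ i ∈ (Finset.univ : Finset (Fin (2 * m))),
        ∑ j, sgn σ i * sgn σ j * Wmat E i j < t)
      ≤ (2 * m : ℕ) * Real.exp (θ * t +
        (q * (((2 * m : ℕ) * Real.cosh θ) ^ K / (K.factorial : ℝ) - ((2 * m - 1).choose K : ℝ))
          + (p - q) * ((m - 1).choose K : ℝ) * (Real.exp (-θ * K) - 1))) := by
  have h0 : ∀ e : KSet (2 * m) (K + 1), 0 ≤ edgeP p q σ e.1 :=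
    fun e => edgeP_nonneg p q hq hpq σ e.1
  have h1 : ∀ e : KSet (2 * m) (K + 1), edgeP p q σ e.1 ≤ 1 := fun e =>
    (edgeP_le p q hpq σ e.1).trans hp
  refine (PrB_union h0 h1 _ _).trans ?_
  refine (Finset.sum_le_sum (g := fun _ => Real.exp (θ * t +
        (q * (((2 * m : ℕ) * Real.cosh θ) ^ K / (K.factorial : ℝ) - ((2 * m - 1).choose K : ℝ))
          + (p - q) * ((m - 1).choose K : ℝ) * (Real.exp (-θ * K) - 1)))) ?_).trans (by simp)
  intro i _
  have hc := PrB_chernoff h0 h1 (fun e => -θ * cst σ i e.1) (-θ * t)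
  refine (PrB_mono h0 h1 ?_).trans (hc.trans (Real.exp_le_exp.mpr ?_))
  · intro E hE
    have : ∑ j, sgn σ i * sgn σ j * Wmat E i j = ∑ e : KSet (2 * m) (K + 1), cst σ i e.1 * ind (E e) := by
      simp only [Wmat_eq, cst, Finset.mul_sum, Finset.sum_mul]
      rw [Finset.sum_comm]
      refine Finset.sum_congr rfl fun e _ => Finset.sum_congr rfl fun j _ => ?_
      ring
    rw [this] at hE
    simp only [mul_assoc]
    rw [← Finset.mul_sum]
    nlinarith
  · have h2 := sum_exp_diag (K := K) p q θ hq σ hσ i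
    linarith

lemma sum_pm_le {n k : ℕ} (e : KSet n k) (c : Fin n → Fin n → ℝ) (hc : ∀ i j, |c i j| ≤ 1) :
    |∑ i, ∑ j, pm e.1 i j * c i j| ≤ ∑ i, ∑ j, pm e.1 i j * |c i j| ∧
    ∑ i, ∑ j, pm e.1 i j * |c i j| ≤ k * ((k - 1 : ℕ) : ℝ) := by
  constructor
  · refine (Finset.abs_sum_le_sum_abs _ _).trans (Finset.sum_le_sum fun i _ => ?_)
    refine (Finset.abs_sum_le_sum_abs _ _).trans (Finset.sum_le_sum fun j _ => ?_)
    rw [abs_mul, abs_of_nonneg (pm_nonneg _ _ _)]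
  · rw [← pm_total e]
    refine Finset.sum_le_sum fun i _ => Finset.sum_le_sum fun j _ => ?_
    exact mul_le_of_le_one_right (pm_nonneg _ _ _) (hc i j)

lemma ev_sparse_one {n k : ℕ} (p q : ℝ) (hq : 0 ≤ q) (hpq : q ≤ p) (hp : p ≤ 1)
    (σ : Fin n → Bool) (B : ℝ) (hB : ∀ i j, EWf (k := k) p q σ i j ≤ B)
    (S : Finset (Fin n)) (θ t : ℝ) (hθ : 0 < θ) :
    PrB (fun e : KSet n k => edgeP p q σ e.1)
      (fun E => t < ∑ i ∈ S, ∑ j ∈ S, Wmat E i j)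
      ≤ Real.exp (-(θ * t) + θ * Real.exp (θ * (k * ((k - 1 : ℕ) : ℝ))) * (B * (S.card : ℝ) ^ 2)) := by
  have h0 : ∀ e : KSet n k, 0 ≤ edgeP p q σ e.1 := fun e => edgeP_nonneg p q hq hpq σ e.1
  have h1 : ∀ e : KSet n k, edgeP p q σ e.1 ≤ 1 := fun e => (edgeP_le p q hpq σ e.1).trans hp
  set c : Fin n → Fin n → ℝ := fun i j => if i ∈ S ∧ j ∈ S then 1 else 0 with hcdef
  have hc0 : ∀ i j, 0 ≤ c i j := fun i j => by simp only [hcdef]; split_ifs <;> simp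
  have hc1 : ∀ i j, |c i j| ≤ 1 := fun i j => by simp only [hcdef]; split_ifs <;> simp
  have hS : ∀ M : Fin n → Fin n → ℝ, ∑ i ∈ S, ∑ j ∈ S, M i j = ∑ i, ∑ j, M i j * c i j := by
    intro M
    simp only [hcdef, mul_ite, mul_one, mul_zero, ite_and]
    simp [Finset.sum_ite_mem]
  set R : ℝ := k * ((k - 1 : ℕ) : ℝ)
  set v : KSet n k → ℝ := fun e => ∑ i, ∑ j, pm e.1 i j * c i j with hv
  have hv0 : ∀ e, 0 ≤ v e := fun e => Finset.sum_nonneg fun i _ => Finset.sum_nonneg fun j _ =>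
    mul_nonneg (pm_nonneg _ _ _) (hc0 i j)
  have hvR : ∀ e, v e ≤ R := fun e => (le_abs_self _).trans
    ((sum_pm_le e c hc1).1.trans (sum_pm_le e c hc1).2)
  have hc := PrB_chernoff h0 h1 (fun e => θ * v e) (θ * t)
  refine (PrB_mono h0 h1 ?_).trans (hc.trans (Real.exp_le_exp.mpr ?_))
  · intro E hE
    rw [hS (fun i j => Wmat E i j), sum_W_weight] at hE
    simp only [mul_assoc]
    rw [← Finset.mul_sum]
    exact mul_le_mul_of_nonneg_left hE.le hθ.le
  · have h2 : ∀ e, edgeP p q σ e.1 * (Real.exp (θ * v e) - 1)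
        ≤ θ * Real.exp (θ * R) * (v e * edgeP p q σ e.1) := by
      intro e
      have a0 : 0 ≤ θ * v e := mul_nonneg hθ.le (hv0 e)
      have a1 : Real.exp (θ * v e) - 1 ≤ θ * v e * Real.exp (θ * v e) := by
        have b1 := Real.add_one_le_exp (-(θ * v e))
        have b2 : Real.exp (-(θ * v e)) * Real.exp (θ * v e) = 1 := by
          rw [← Real.exp_add]; simp
        nlinarith [Real.exp_pos (θ * v e)]
      have a2 : Real.exp (θ * v e) ≤ Real.exp (θ * R) :=
        Real.exp_le_exp.mpr (mul_le_mul_of_nonneg_left (hvR e) hθ.le)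
      have a3 : Real.exp (θ * v e) - 1 ≤ θ * v e * Real.exp (θ * R) :=
        a1.trans (mul_le_mul_of_nonneg_left a2 a0)
      calc _ ≤ edgeP p q σ e.1 * (θ * v e * Real.exp (θ * R)) :=
            mul_le_mul_of_nonneg_left a3 (h0 e)
        _ = _ := by ring
    have h3 := Finset.sum_le_sum (s := Finset.univ) (fun e _ => h2 e)
    rw [← Finset.mul_sum, ← sum_EW_weight, ← hS (fun i j => EWf (k := k) p q σ i j)] at h3
    have h4 : ∑ i ∈ S, ∑ j ∈ S, EWf (k := k) p q σ i j ≤ B * (S.card : ℝ) ^ 2 := by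
      calc _ ≤ ∑ i ∈ S, ∑ j ∈ S, B :=
            Finset.sum_le_sum fun i _ => Finset.sum_le_sum fun j _ => hB i j
        _ = _ := by simp; ring
    have h5 : 0 ≤ θ * Real.exp (θ * R) := by positivity
    have := mul_le_mul_of_nonneg_left h4 h5
    linarith

lemma ev_cut_one {n k : ℕ} (p q : ℝ) (hq : 0 ≤ q) (hpq : q ≤ p) (hp : p ≤ 1)
    (σ : Fin n → Bool) (B : ℝ) (hB : ∀ i j, EWf (k := k) p q σ i j ≤ B)
    (s r : Fin n → Bool) (θ t : ℝ) (hθ : 0 < θ) (hθ1 : θ * (k * ((k - 1 : ℕ) : ℝ)) ≤ 1) :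
    PrB (fun e : KSet n k => edgeP p q σ e.1)
      (fun E => t < ∑ i, ∑ j, (Wmat E i j - EWf (k := k) p q σ i j) * (sgn s i * sgn r j))
      ≤ Real.exp (-(θ * t) + θ ^ 2 * (k * ((k - 1 : ℕ) : ℝ)) * (B * (n : ℝ) ^ 2)) := by
  have h0 : ∀ e : KSet n k, 0 ≤ edgeP p q σ e.1 := fun e => edgeP_nonneg p q hq hpq σ e.1
  have h1 : ∀ e : KSet n k, edgeP p q σ e.1 ≤ 1 := fun e => (edgeP_le p q hpq σ e.1).trans hp
  set c : Fin n → Fin n → ℝ := fun i j => sgn s i * sgn r j with hcdef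
  have hc1 : ∀ i j, |c i j| = 1 := fun i j => by
    simp only [hcdef, sgn]; split_ifs <;> simp
  set R : ℝ := k * ((k - 1 : ℕ) : ℝ)
  set v : KSet n k → ℝ := fun e => ∑ i, ∑ j, pm e.1 i j * c i j with hv
  set u : KSet n k → ℝ := fun e => ∑ i, ∑ j, pm e.1 i j * |c i j| with hu
  have hvu : ∀ e, |v e| ≤ u e := fun e => (sum_pm_le e c fun i j => (hc1 i j).le).1
  have huR : ∀ e, u e ≤ R := fun e => (sum_pm_le e c fun i j => (hc1 i j).le).2
  have hc := PrB_chernoff h0 h1 (fun e => θ * v e) (θ * t + θ * ∑ e, v e * edgeP p q σ e.1)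
  refine (PrB_mono h0 h1 ?_).trans (hc.trans (Real.exp_le_exp.mpr ?_))
  · intro E hE
    simp only [sub_mul, Finset.sum_sub_distrib] at hE
    rw [sum_W_weight E c, sum_EW_weight p q σ c] at hE
    simp only [mul_assoc]
    rw [← Finset.mul_sum, ← mul_add]
    refine mul_le_mul_of_nonneg_left ?_ hθ.le
    linarith
  · have h2 : ∀ e, edgeP p q σ e.1 * (Real.exp (θ * v e) - 1)
        ≤ θ * (v e * edgeP p q σ e.1) + θ ^ 2 * R * (u e * edgeP p q σ e.1) := by
      intro e
      have b0 : |θ * v e| ≤ 1 := by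
        rw [abs_mul, abs_of_pos hθ]
        exact (mul_le_mul_of_nonneg_left ((hvu e).trans (huR e)) hθ.le).trans hθ1
      have b1 := (abs_le.mp (Real.abs_exp_sub_one_sub_id_le b0)).2
      have b2 : v e ^ 2 ≤ R * u e := by
        rw [← sq_abs, sq]
        exact mul_le_mul ((hvu e).trans (huR e)) (hvu e) (abs_nonneg _)
          ((abs_nonneg _).trans ((hvu e).trans (huR e)))
      have b3 : Real.exp (θ * v e) - 1 ≤ θ * v e + θ ^ 2 * (R * u e) := by
        have := mul_le_mul_of_nonneg_left b2 (sq_nonneg θ)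
        nlinarith
      calc _ ≤ edgeP p q σ e.1 * (θ * v e + θ ^ 2 * (R * u e)) :=
            mul_le_mul_of_nonneg_left b3 (h0 e)
        _ = _ := by ring
    have h3 := Finset.sum_le_sum (s := Finset.univ) (fun e _ => h2 e)
    rw [Finset.sum_add_distrib, ← Finset.mul_sum, ← Finset.mul_sum] at h3
    have h4 : ∑ e : KSet n k, u e * edgeP p q σ e.1 ≤ B * (n : ℝ) ^ 2 := by
      rw [← sum_EW_weight p q σ (fun i j => |c i j|)]
      calc _ ≤ ∑ i : Fin n, ∑ j : Fin n, B :=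
            Finset.sum_le_sum fun i _ => Finset.sum_le_sum fun j _ => by
              rw [hc1, mul_one]; exact hB i j
        _ = _ := by simp; ring
    have hR : 0 ≤ R := by positivity
    have h5 : 0 ≤ θ ^ 2 * R := by positivity
    have := mul_le_mul_of_nonneg_left h4 h5
    linarith

lemma ev_sparse {n k : ℕ} (p q : ℝ) (hq : 0 ≤ q) (hpq : q ≤ p) (hp : p ≤ 1)
    (σ : Fin n → Bool) (C d g h θ : ℝ) (hn : 0 < n) (hd : 0 ≤ d) (hC : 0 ≤ C)
    (hB : ∀ i j, EWf (k := k) p q σ i j ≤ C * d / n) (hθ : 0 < θ) (hθh : θ * h = 6)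
    (hg : θ * Real.exp (θ * (k * ((k - 1 : ℕ) : ℝ))) * C * g ≤ 3) :
    PrB (fun e : KSet n k => edgeP p q σ e.1)
      (fun E => ∃ S ∈ (Finset.univ : Finset (Finset (Fin n))).erase ∅,
        (S.card : ℝ) ≤ g * n ∧ h * d * S.card < ∑ i ∈ S, ∑ j ∈ S, Wmat E i j)
      ≤ (1 + Real.exp (-3 * d)) ^ n - 1 := by
  have h0 : ∀ e : KSet n k, 0 ≤ edgeP p q σ e.1 := fun e => edgeP_nonneg p q hq hpq σ e.1
  have h1 : ∀ e : KSet n k, edgeP p q σ e.1 ≤ 1 := fun e => (edgeP_le p q hpq σ e.1).trans hp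
  have hn' : (0:ℝ) < n := by exact_mod_cast hn
  refine (PrB_union h0 h1 _ _).trans ?_
  have key : ∀ S ∈ (Finset.univ : Finset (Finset (Fin n))).erase ∅,
      PrB (fun e : KSet n k => edgeP p q σ e.1)
      (fun E => (S.card : ℝ) ≤ g * n ∧ h * d * S.card < ∑ i ∈ S, ∑ j ∈ S, Wmat E i j)
      ≤ Real.exp (-3 * d) ^ S.card := by
    intro S _
    by_cases hS : (S.card : ℝ) ≤ g * n
    · have e1 := ev_sparse_one p q hq hpq hp σ _ hB S θ (h * d * S.card) hθ
      refine (PrB_mono h0 h1 (fun E hE => hE.2)).trans (e1.trans ?_)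
      rw [← Real.exp_nat_mul]
      apply Real.exp_le_exp.mpr
      set A := θ * Real.exp (θ * (k * ((k - 1 : ℕ) : ℝ))) with hA
      have hA0 : 0 ≤ A := by positivity
      have e2 : A * (C * d / n * (S.card : ℝ) ^ 2) ≤ 3 * d * S.card := by
        have e3 : A * (C * d / n * (S.card : ℝ) ^ 2) = A * C * d * S.card * (S.card / n) := by
          field_simp
        have e4 : (S.card : ℝ) / n ≤ g := by rw [div_le_iff₀ hn']; exact hS
        rw [e3]
        calc _ ≤ A * C * d * S.card * g := mul_le_mul_of_nonneg_left e4 (by positivity)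
          _ = A * C * g * (d * S.card) := by ring
          _ ≤ 3 * (d * S.card) := mul_le_mul_of_nonneg_right hg (by positivity)
          _ = _ := by ring
      have e5 : θ * (h * d * S.card) = 6 * (d * S.card) := by rw [← hθh]; ring
      rw [e5]
      linarith
    · have : PrB (fun e : KSet n k => edgeP p q σ e.1)
          (fun E => (S.card : ℝ) ≤ g * n ∧ h * d * S.card < ∑ i ∈ S, ∑ j ∈ S, Wmat E i j) = 0 := by
        unfold PrB
        simp [hS]
      rw [this]; positivity
  refine (Finset.sum_le_sum key).trans (le_of_eq ?_)
  have e6 : ∑ S : Finset (Fin n), Real.exp (-3 * d) ^ S.card = (1 + Real.exp (-3 * d)) ^ n := by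
    have := Finset.prod_one_add (f := fun _ : Fin n => Real.exp (-3 * d)) Finset.univ
    simpa using this.symm
  rw [← e6, ← Finset.add_sum_erase _ _ (Finset.mem_univ ∅)]
  simp

lemma ev_cut {n k : ℕ} (p q : ℝ) (hq : 0 ≤ q) (hpq : q ≤ p) (hp : p ≤ 1)
    (σ : Fin n → Bool) (C d e θ c : ℝ) (hn : 0 < n) (hd : 0 ≤ d)
    (hB : ∀ i j, EWf (k := k) p q σ i j ≤ C * d / n) (hθ : 0 < θ)
    (hθ1 : θ * (k * ((k - 1 : ℕ) : ℝ)) ≤ 1)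
    (hc : -(θ * e) + θ ^ 2 * (k * ((k - 1 : ℕ) : ℝ)) * C ≤ -c) :
    PrB (fun e : KSet n k => edgeP p q σ e.1)
      (fun E => ∃ sr ∈ (Finset.univ : Finset ((Fin n → Bool) × (Fin n → Bool))),
        e * d * n < ∑ i, ∑ j, (Wmat E i j - EWf (k := k) p q σ i j) * (sgn sr.1 i * sgn sr.2 j))
      ≤ Real.exp (n * (Real.log 4 - c * d)) := by
  have h0 : ∀ e : KSet n k, 0 ≤ edgeP p q σ e.1 := fun e => edgeP_nonneg p q hq hpq σ e.1
  have h1 : ∀ e : KSet n k, edgeP p q σ e.1 ≤ 1 := fun e => (edgeP_le p q hpq σ e.1).trans hp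
  have hn' : (0:ℝ) < n := by exact_mod_cast hn
  refine (PrB_union h0 h1 _ _).trans ?_
  refine (Finset.sum_le_sum (g := fun _ => Real.exp (n * (-(c * d)))) ?_).trans ?_
  · intro sr _
    have e1 := ev_cut_one p q hq hpq hp σ _ hB sr.1 sr.2 θ (e * d * n) hθ hθ1
    refine e1.trans (Real.exp_le_exp.mpr ?_)
    have := mul_le_mul_of_nonneg_right hc (show 0 ≤ d * n by positivity)
    have e2 : C * d / n * (n : ℝ) ^ 2 = C * (d * n) := by field_simp
    rw [e2]
    nlinarith
  · rw [Finset.sum_const, Finset.card_univ, Fintype.card_prod, Fintype.card_fun, Fintype.card_bool,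
      Fintype.card_fin, nsmul_eq_mul, sub_eq_add_neg, mul_add, Real.exp_add,
      Real.exp_nat_mul (Real.log 4), Real.exp_log (by norm_num)]
    apply le_of_eq
    push_cast
    rw [← mul_pow]
    norm_num

lemma good_pos {m K : ℕ} (hm : 3 ≤ 2 * m) (p q : ℝ) (hq : 0 ≤ q) (hpq : q ≤ p)
    (σ : Fin (2 * m) → Bool) (hσ : balanced σ) (E : KSet (2 * m) (K + 2) → Bool)
    (d C C' g h e K1 K2 l ε : ℝ) (hd : 0 < d) (hC : 0 ≤ C) (hC' : 0 ≤ C') (hh : 0 ≤ h)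
    (hK1 : 0 < K1) (hK12 : K1 ≤ K2) (hl : 0 < l) (hg : 1 ≤ g * K1 ^ 2) (hε : 0 < ε)
    (hB : ∀ i j, EWf (k := K + 2) p q σ i j ≤ C * d / (2 * m : ℕ))
    (hconst : K2 ^ 2 * e + 2 * C / K2 + 2 * (K1 / K2) * C' + (h * l + C' / l) ≤ ε / 2)
    (hdeg : ∀ i, ∑ j, Wmat E i j ≤ C' * d)
    (hsp : ∀ S : Finset (Fin (2 * m)), (S.card : ℝ) ≤ g * (2 * m : ℕ) →
      ∑ i ∈ S, ∑ j ∈ S, Wmat E i j ≤ h * d * S.card)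
    (hcut : ∀ s r : Fin (2 * m) → Bool,
      ∑ i, ∑ j, (Wmat E i j - EWf (k := K + 2) p q σ i j) * (sgn s i * sgn r j)
        ≤ e * d * (2 * m : ℕ))
    (hdg : ∀ i, ε * d ≤ ∑ j, sgn σ i * sgn σ j * Wmat E i j) :
    0 < lambda3 (PiM σ * LGamma σ (Wmat E) * PiM σ) := by
  refine lambda3_pos hm σ hσ _ (ε / 2 * d) (by positivity) ?_
  intro x hx1 hx2
  rw [LGamma_quad]
  have hsym : ∀ i j, Wmat E i j = Wmat E j i := fun i j => by
    simp only [Wmat_eq]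
    exact Finset.sum_congr rfl fun e _ => by rw [pm_symm]
  have hnn : ∀ i j, 0 ≤ Wmat E i j := fun i j => by
    rw [Wmat_eq]
    exact Finset.sum_nonneg fun e _ => mul_nonneg (pm_nonneg _ _ _) (ind_nonneg _)
  have hdi : ∀ i, Wmat E i i = 0 := fun i => by simp [Wmat]
  have hy1 : ∑ i, sgn σ i * (sgn σ i * x i) = 0 := by
    simp only [← mul_assoc, sgn_sq, one_mul]; exact hx1
  have hq1 := quad_bound (by omega) (fun i j => Wmat E i j) (EWf (k := K + 2) p q σ) hsym hnn hdi
    (fun i => sgn σ i * x i) d C C' g h e K1 K2 l hd.le hC hC' hh hK1 hK12 hl hg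
    (EWf_nonneg p q hq hpq σ) hB (EWf_quad p q hq hpq σ hσ _ hx2 hy1) hdeg hsp hcut
  have hsq : ∑ i, (sgn σ i * x i) ^ 2 = ∑ i, x i ^ 2 :=
    Finset.sum_congr rfl fun i _ => by rw [mul_pow, sq (sgn σ i), sgn_sq, one_mul]
  rw [hsq] at hq1
  have hX : 0 ≤ ∑ i, x i ^ 2 := Finset.sum_nonneg fun i _ => sq_nonneg _
  have h1 : ε * d * ∑ i, x i ^ 2 ≤ ∑ i, (∑ j, sgn σ i * sgn σ j * Wmat E i j) * x i ^ 2 := by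
    rw [Finset.mul_sum]
    exact Finset.sum_le_sum fun i _ => mul_le_mul_of_nonneg_right (hdg i) (sq_nonneg _)
  have h2 := mul_le_mul_of_nonneg_right (mul_le_mul_of_nonneg_right hconst hd.le) hX
  linarith

lemma prob_fixed {m K : ℕ} (hm : 3 ≤ 2 * m) (p q : ℝ) (hq : 0 ≤ q) (hpq : q ≤ p) (hp : p ≤ 1)
    (σ : Fin (2 * m) → Bool) (hσ : balanced σ)
    (d C C' g h e K1 K2 l ε θ θ2 θ3 c : ℝ) (hd : 0 < d) (hC : 0 ≤ C) (hC' : 0 ≤ C') (hh : 0 ≤ h)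
    (hK1 : 0 < K1) (hK12 : K1 ≤ K2) (hl : 0 < l) (hg : 1 ≤ g * K1 ^ 2) (hε : 0 < ε)
    (hB : ∀ i j, EWf (k := K + 2) p q σ i j ≤ C * d / (2 * m : ℕ))
    (hconst : K2 ^ 2 * e + 2 * C / K2 + 2 * (K1 / K2) * C' + (h * l + C' / l) ≤ ε / 2)
    (hθ : 0 < θ) (hθ2 : 0 < θ2) (hθh : θ2 * h = 6)
    (hg2 : θ2 * Real.exp (θ2 * ((K + 2 : ℕ) * ((K + 2 - 1 : ℕ) : ℝ))) * C * g ≤ 3)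
    (hθ3 : 0 < θ3) (hθ31 : θ3 * ((K + 2 : ℕ) * ((K + 2 - 1 : ℕ) : ℝ)) ≤ 1)
    (hc : -(θ3 * e) + θ3 ^ 2 * ((K + 2 : ℕ) * ((K + 2 - 1 : ℕ) : ℝ)) * C ≤ -c) :
    PrB (fun e : KSet (2 * m) (K + 2) => edgeP p q σ e.1)
      (fun E => ¬ 0 < lambda3 (PiM σ * LGamma σ (Wmat E) * PiM σ))
      ≤ (2 * m : ℕ) * Real.exp (-(C' * d) + p * ((2 * m - 1).choose (K + 1) : ℝ)
          * (Real.exp (K + 1 : ℕ) - 1))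
        + (((1 + Real.exp (-3 * d)) ^ (2 * m) - 1)
        + (Real.exp ((2 * m : ℕ) * (Real.log 4 - c * d))
        + (2 * m : ℕ) * Real.exp (θ * (ε * d) +
        (q * (((2 * m : ℕ) * Real.cosh θ) ^ (K + 1) / ((K + 1).factorial : ℝ)
          - ((2 * m - 1).choose (K + 1) : ℝ))
          + (p - q) * ((m - 1).choose (K + 1) : ℝ) * (Real.exp (-θ * (K + 1 : ℕ)) - 1))))) := by
  have h0 : ∀ e : KSet (2 * m) (K + 2), 0 ≤ edgeP p q σ e.1 :=
    fun e => edgeP_nonneg p q hq hpq σ e.1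
  have h1 : ∀ e : KSet (2 * m) (K + 2), edgeP p q σ e.1 ≤ 1 :=
    fun e => (edgeP_le p q hpq σ e.1).trans hp
  have a1 := ev_deg (K := K + 1) p q hq hpq hp σ (C' * d)
  have a2 := ev_sparse (k := K + 2) p q hq hpq hp σ C d g h θ2 (by omega) hd.le hC hB hθ2 hθh hg2
  have a3 := ev_cut (k := K + 2) p q hq hpq hp σ C d e θ3 c (by omega) hd.le hB hθ3 hθ31 hc
  have a4 := ev_diag (K := K + 1) p q θ hq hpq hp hθ σ hσ (ε * d)
  refine le_trans ?_ (add_le_add a1 (add_le_add a2 (add_le_add a3 a4)))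
  refine le_trans ?_ (add_le_add le_rfl (add_le_add le_rfl (PrB_or h0 h1 _ _)))
  refine le_trans ?_ (add_le_add le_rfl (PrB_or h0 h1 _ _))
  refine le_trans ?_ (PrB_or h0 h1 _ _)
  refine PrB_mono h0 h1 ?_
  intro E hE
  by_contra hcon
  push Not at hcon
  obtain ⟨b1, b2, b3, b4⟩ := hcon
  refine hE (good_pos hm p q hq hpq σ hσ E d C C' g h e K1 K2 l ε hd hC hC' hh hK1 hK12 hl hg hε hB
    hconst (fun i => b1 i (Finset.mem_univ i)) ?_ ?_ (fun i => b4 i (Finset.mem_univ i)))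
  · intro S hS
    by_cases hS0 : S = ∅
    · subst hS0; simp
    · exact b2 S (Finset.mem_erase.mpr ⟨hS0, Finset.mem_univ S⟩) hS
  · intro s r
    exact b3 (s, r) (Finset.mem_univ _)

lemma exists_consts (C C' R ε : ℝ) (hC : 0 < C) (hC' : 0 < C') (hR : 0 < R) (hε : 0 < ε) :
    ∃ g h e K1 K2 l θ2 θ3 c : ℝ, 0 ≤ h ∧ 0 < K1 ∧ K1 ≤ K2 ∧ 0 < l ∧ 1 ≤ g * K1 ^ 2 ∧
      K2 ^ 2 * e + 2 * C / K2 + 2 * (K1 / K2) * C' + (h * l + C' / l) ≤ ε / 2 ∧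
      0 < θ2 ∧ θ2 * h = 6 ∧ θ2 * Real.exp (θ2 * R) * C * g ≤ 3 ∧ 0 < θ3 ∧ θ3 * R ≤ 1 ∧
      -(θ3 * e) + θ3 ^ 2 * R * C ≤ -c ∧ 0 < c := by
  obtain ⟨l, hl⟩ : ∃ l, l = 16 * C' / ε := ⟨_, rfl⟩
  have hl0 : 0 < l := by rw [hl]; positivity
  obtain ⟨h, hh⟩ : ∃ h, h = ε / (16 * l) := ⟨_, rfl⟩
  have hh0 : 0 < h := by rw [hh]; positivity
  obtain ⟨θ2, hθ2⟩ : ∃ t, t = 6 / h := ⟨_, rfl⟩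
  have hθ20 : 0 < θ2 := by rw [hθ2]; positivity
  obtain ⟨g, hg⟩ : ∃ t, t = 3 / (θ2 * Real.exp (θ2 * R) * C) := ⟨_, rfl⟩
  have hg0 : 0 < g := by rw [hg]; positivity
  obtain ⟨K1, hK1⟩ : ∃ t, t = 1 + 1 / g := ⟨_, rfl⟩
  have hK10 : 0 < K1 := by rw [hK1]; positivity
  obtain ⟨K2, hK2⟩ : ∃ t, t = K1 + 16 * K1 * C' / ε + 16 * C / ε := ⟨_, rfl⟩
  have hK20 : 0 < K2 := by rw [hK2]; positivity
  obtain ⟨e, he⟩ : ∃ t, t = ε / (8 * K2 ^ 2) := ⟨_, rfl⟩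
  have he0 : 0 < e := by rw [he]; positivity
  obtain ⟨θ3, hθ3⟩ : ∃ t, t = min (1 / R) (e / (2 * R * C)) := ⟨_, rfl⟩
  have hθ30 : 0 < θ3 := by rw [hθ3]; positivity
  refine ⟨g, h, e, K1, K2, l, θ2, θ3, θ3 * e / 2, hh0.le, hK10, ?_, hl0, ?_, ?_, hθ20, ?_, ?_,
    hθ30, ?_, ?_, by positivity⟩
  · rw [hK2]
    have : 0 ≤ 16 * K1 * C' / ε := by positivity
    have : 0 ≤ 16 * C / ε := by positivity
    linarith
  · have : g * K1 ^ 2 = g + 2 + 1 / g := by rw [hK1]; field_simp; ring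
    rw [this]
    have : 0 < 1 / g := by positivity
    linarith
  · have e1 : K2 ^ 2 * e = ε / 8 := by rw [he]; field_simp
    have e2 : 2 * C / K2 ≤ ε / 8 := by
      rw [div_le_iff₀ hK20]
      have : 16 * C / ε ≤ K2 := by
        rw [hK2]
        have : 0 ≤ 16 * K1 * C' / ε := by positivity
        linarith
      rw [div_le_iff₀ hε] at this
      linarith
    have e3 : 2 * (K1 / K2) * C' ≤ ε / 8 := by
      have : 2 * (K1 / K2) * C' = 2 * K1 * C' / K2 := by ring
      rw [this, div_le_iff₀ hK20]
      have : 16 * K1 * C' / ε ≤ K2 := by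
        rw [hK2]
        have : 0 ≤ 16 * C / ε := by positivity
        linarith
      rw [div_le_iff₀ hε] at this
      linarith
    have e4 : h * l = ε / 16 := by rw [hh]; field_simp
    have e5 : C' / l = ε / 16 := by rw [hl]; field_simp
    linarith
  · rw [hθ2]; field_simp
  · apply le_of_eq; rw [hg]; field_simp
  · have : θ3 ≤ 1 / R := by rw [hθ3]; exact min_le_left _ _
    rwa [le_div_iff₀ hR] at this
  · have : θ3 ≤ e / (2 * R * C) := by rw [hθ3]; exact min_le_right _ _
    rw [le_div_iff₀ (by positivity)] at this
    have := mul_le_mul_of_nonneg_left this hθ30.le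
    nlinarith

lemma choose_id (N K : ℕ) (hN : 2 ≤ N) :
    ((N : ℝ) - 1) * ((N - 2).choose K : ℝ) = ((N - 1).choose (K + 1) : ℝ) * ((K : ℝ) + 1) := by
  obtain ⟨r, rfl⟩ : ∃ r, N = r + 2 := ⟨N - 2, by omega⟩
  have := Nat.add_one_mul_choose_eq r K
  have h2 : ((r : ℝ) + 1) * (r.choose K : ℝ) = ((r + 1).choose (K + 1) : ℝ) * ((K : ℝ) + 1) := by
    exact_mod_cast this
  simp only [Nat.add_sub_cancel, show r + 2 - 1 = r + 1 by omega]
  rw [← h2]; push_cast; ring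

lemma pParam_facts (K N : ℕ) (α : ℝ) (hα : 0 < α) (hN : K + 2 ≤ N) :
    0 ≤ pParam (K + 2) α N ∧
    pParam (K + 2) α N * ((N - 1).choose (K + 1) : ℝ) = α * Real.log N ∧
    pParam (K + 2) α N * ((N - 2).choose K : ℝ) ≤ 2 * α * (K + 1) * Real.log N / N ∧
    pParam (K + 2) α N ≤ 2 * α * (K + 1) * (Real.log N / N) := by
  have hlog : 0 ≤ Real.log N := Real.log_natCast_nonneg N
  have hc : (0:ℝ) < ((N - 1).choose (K + 1) : ℝ) := by
    exact_mod_cast Nat.choose_pos (by omega)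
  have hc2 : (1:ℝ) ≤ ((N - 2).choose K : ℝ) := by
    exact_mod_cast Nat.choose_pos (by omega)
  have hN2 : (2:ℝ) ≤ N := by exact_mod_cast (by omega : 2 ≤ N)
  have h0 : 0 ≤ pParam (K + 2) α N := by unfold pParam; positivity
  have h1 : pParam (K + 2) α N * ((N - 1).choose (K + 1) : ℝ) = α * Real.log N := by
    unfold pParam
    rw [show K + 2 - 1 = K + 1 by omega]
    field_simp
  have h2 : pParam (K + 2) α N * ((N - 2).choose K : ℝ) ≤ 2 * α * (K + 1) * Real.log N / N := by
    have hid := choose_id N K (by omega)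
    rw [le_div_iff₀ (by linarith)]
    have e1 : pParam (K + 2) α N * ((N - 2).choose K : ℝ) * ((N : ℝ) - 1)
        = α * Real.log N * (K + 1) := by
      rw [← h1, mul_assoc, mul_comm ((N - 2).choose K : ℝ), hid]; ring
    have e2 : 0 ≤ pParam (K + 2) α N * ((N - 2).choose K : ℝ) := by positivity
    nlinarith
  refine ⟨h0, h1, h2, ?_⟩
  have : pParam (K + 2) α N ≤ pParam (K + 2) α N * ((N - 2).choose K : ℝ) :=
    le_mul_of_one_le_right h0 hc2
  rw [← mul_div_assoc]
  linarith

lemma exists_balanced (m : ℕ) : ∃ σ : Fin (2 * m) → Bool, balanced σ := by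
  refine ⟨fun i => decide (i.1 < m), ?_⟩
  unfold balanced
  have : (Finset.univ.filter (fun i : Fin (2 * m) => decide (i.1 < m) = true)).card = m := by
    simp only [decide_eq_true_eq]
    rw [Fin.card_filter_val_lt]
    omega
  rw [this]

lemma cond_simpl (K : ℕ) (α β : ℝ) (hβ : 0 < β) (hαβ : β < α)
    (hcond : Real.sqrt (4 * (((K + 2 : ℕ) : ℝ) - 1) * ((((K + 2 : ℕ) : ℝ) / 2 ^ (K + 2)) * α
      + (1 - ((K + 2 : ℕ) : ℝ) / 2 ^ (K + 2)) * β))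
      < (((K + 2 : ℕ) : ℝ) - 1) / 2 ^ (K + 2 - 1) * (α - β)) :
    4 * β + 2 * (((K + 1 : ℕ) : ℝ) + 1) * ((α - β) / 2 ^ (K + 1))
      < ((K + 1 : ℕ) : ℝ) * ((α - β) / 2 ^ (K + 1)) ^ 2 := by
  have hab : 0 < α - β := by linarith
  rw [show K + 2 - 1 = K + 1 by omega] at hcond
  push_cast at hcond ⊢
  have hk : (0:ℝ) < (K : ℝ) + 1 := by positivity
  rw [show (K : ℝ) + 2 - 1 = K + 1 by ring] at hcond
  rw [Real.sqrt_lt' (by positivity)] at hcond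
  set D := (α - β) / 2 ^ (K + 1) with hD
  have e1 : ((K : ℝ) + 1) / 2 ^ (K + 1) * (α - β) = (K + 1) * D := by rw [hD]; ring
  have e2 : ((K : ℝ) + 2) / 2 ^ (K + 2) * α + (1 - ((K : ℝ) + 2) / 2 ^ (K + 2)) * β
      = β + (K + 2) * D / 2 := by
    rw [hD, pow_succ (2:ℝ) (K + 1)]; field_simp; ring
  rw [e1, e2] at hcond
  have : ((K : ℝ) + 1) * (4 * β + 2 * ((K : ℝ) + 1 + 1) * D) < (K + 1) * ((K + 1) * D ^ 2) := by
    nlinarith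
  exact lt_of_mul_lt_mul_left this hk.le

set_option maxHeartbeats 1000000

/-- If `((k-1)/2^{k-1})(α-β) > √(4(k-1)((k/2^k)α + (1-k/2^k)β))` then
`λ₃(Π L_Γ Π) > 0` with probability `1 - o(1)`. -/
theorem lambda3_positive_whp (k : ℕ) (hk : 2 ≤ k) (α β : ℝ) (hβ : 0 < β) (hαβ : β < α)
    (hcond : Real.sqrt (4 * ((k : ℝ) - 1) * (((k : ℝ) / 2 ^ k) * α + (1 - (k : ℝ) / 2 ^ k) * β))
      < ((k : ℝ) - 1) / 2 ^ (k - 1) * (α - β)) :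
    Tendsto (fun m : ℕ =>
        prEvent (2 * m) k (pParam k α (2 * m)) (pParam k β (2 * m))
          (fun σ E => 0 < lambda3 (PiM σ * LGamma σ (Wmat E) * PiM σ)))
      atTop (nhds 1) := by
  obtain ⟨K, rfl⟩ : ∃ K, k = K + 2 := ⟨k - 2, by omega⟩
  have hα : 0 < α := by linarith
  have hD := cond_simpl K α β hβ hαβ hcond
  have hDpos : 0 < (α - β) / 2 ^ (K + 1) := div_pos (by linarith) (by positivity)
  obtain ⟨θ, hθ, hL⟩ := exists_theta (K + 1) (by omega) _ β hDpos hβ hD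
  have hlim := diag_limit (K + 1) α β θ
  set Lm := β * (Real.cosh θ ^ (K + 1) - 1)
    + (α - β) / 2 ^ (K + 1) * (Real.exp (-θ * (K + 1 : ℕ)) - 1) with hLm
  obtain ⟨δ, hδ⟩ : ∃ δ, δ = (-1 - Lm) / 4 := ⟨_, rfl⟩
  have hδ0 : 0 < δ := by rw [hδ]; linarith
  obtain ⟨ε, hε⟩ : ∃ ε, ε = δ / θ := ⟨_, rfl⟩
  have hε0 : 0 < ε := by rw [hε]; positivity
  have hθε : θ * ε = δ := by rw [hε]; field_simp
  obtain ⟨C, hCd⟩ : ∃ C, C = 2 * α * ((K : ℝ) + 1) := ⟨_, rfl⟩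
  have hC0 : 0 < C := by rw [hCd]; positivity
  obtain ⟨C', hC'd⟩ : ∃ C', C' = α * Real.exp (K + 1 : ℕ) + 2 := ⟨_, rfl⟩
  have hC'0 : 0 < C' := by rw [hC'd]; positivity
  have hR0 : (0:ℝ) < (K + 2 : ℕ) * ((K + 2 - 1 : ℕ) : ℝ) := by
    have : K + 2 - 1 = K + 1 := by omega
    rw [this]; positivity
  obtain ⟨g, h, e, K1, K2, l, θ2, θ3, c, hh, hK1, hK12, hl, hg, hconst, hθ2, hθh, hg2, hθ3, hθ31,
    hc, hc0⟩ := exists_consts C C' _ ε hC0 hC'0 hR0 hε0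
  have hN : Tendsto (fun m : ℕ => ((2 * m : ℕ) : ℝ)) atTop atTop := by
    have h2m : Tendsto (fun m : ℕ => 2 * m) atTop atTop :=
      tendsto_id.const_mul_atTop' (by norm_num)
    exact tendsto_natCast_atTop_atTop.comp h2m
  have hd : Tendsto (fun m : ℕ => Real.log ((2 * m : ℕ) : ℝ)) atTop atTop :=
    Real.tendsto_log_atTop.comp hN
  have hdN : Tendsto (fun m : ℕ => 2 * α * ((K : ℝ) + 1)
      * (Real.log ((2 * m : ℕ) : ℝ) / ((2 * m : ℕ) : ℝ))) atTop (nhds 0) := by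
    have h1 : Tendsto (fun x : ℝ => Real.log x / x) atTop (nhds 0) :=
      Real.isLittleO_log_id_atTop.tendsto_div_nhds_zero
    have := (h1.comp hN).const_mul (2 * α * ((K : ℝ) + 1))
    rw [mul_zero] at this
    exact this
  set b : ℕ → ℝ := fun m => Real.exp (-Real.log ((2 * m : ℕ) : ℝ))
    + ((Real.exp (Real.exp (-(2 * Real.log ((2 * m : ℕ) : ℝ)))) - 1)
    + (Real.exp (-Real.log ((2 * m : ℕ) : ℝ))
    + Real.exp (-(2 * δ * Real.log ((2 * m : ℕ) : ℝ))))) with hb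
  have hbt : Tendsto b atTop (nhds 0) := by
    have t1 : ∀ a : ℝ, 0 < a → Tendsto (fun m : ℕ => Real.exp (-(a * Real.log ((2 * m : ℕ) : ℝ))))
        atTop (nhds 0) := fun a ha =>
      Real.tendsto_exp_neg_atTop_nhds_zero.comp (hd.const_mul_atTop ha)
    have t2 := t1 1 one_pos
    simp only [one_mul] at t2
    have t3 := ((Real.continuous_exp.tendsto 0).comp (t1 2 two_pos)).sub_const 1
    have t4 := t2.add (t3.add (t2.add (t1 (2 * δ) (by positivity))))
    simp only [Real.exp_zero, sub_self, add_zero] at t4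
    exact t4
  have hev : ∀ᶠ m : ℕ in atTop,
      1 - b m ≤ prEvent (2 * m) (K + 2) (pParam (K + 2) α (2 * m)) (pParam (K + 2) β (2 * m))
          (fun σ E => 0 < lambda3 (PiM σ * LGamma σ (Wmat E) * PiM σ)) ∧
      prEvent (2 * m) (K + 2) (pParam (K + 2) α (2 * m)) (pParam (K + 2) β (2 * m))
          (fun σ E => 0 < lambda3 (PiM σ * LGamma σ (Wmat E) * PiM σ)) ≤ 1 := by
    filter_upwards [eventually_ge_atTop (K + 2), hdN.eventually_le_const one_pos,
      hlim.eventually_le_const (show Lm < Lm + δ by linarith),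
      hd.eventually_ge_atTop ((Real.log 4 + 1) / c)] with m hm hp1 ham hdc
    have hNpos : (0:ℝ) < ((2 * m : ℕ) : ℝ) := by exact_mod_cast (by omega : 0 < 2 * m)
    obtain ⟨d, hdd⟩ : ∃ d, d = Real.log ((2 * m : ℕ) : ℝ) := ⟨_, rfl⟩
    have hd0 : 0 < d := by
      rw [hdd]; exact Real.log_pos (by exact_mod_cast (by omega : 1 < 2 * m))
    have hexpd : ((2 * m : ℕ) : ℝ) = Real.exp d := by rw [hdd, Real.exp_log hNpos]
    obtain ⟨p0, pc, pB, ple⟩ := pParam_facts K (2 * m) α hα (by omega)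
    obtain ⟨q0, qc, -, -⟩ := pParam_facts K (2 * m) β hβ (by omega)
    have hpq : pParam (K + 2) β (2 * m) ≤ pParam (K + 2) α (2 * m) := by
      unfold pParam
      have := Real.log_natCast_nonneg (2 * m)
      gcongr
    have hple : pParam (K + 2) α (2 * m) ≤ 1 := ple.trans hp1
    refine prEvent_bounds p0 hple q0 (hpq.trans hple) _ (exists_balanced m) _ ?_
    intro σ hσ
    have hB : ∀ i j, EWf (k := K + 2) (pParam (K + 2) α (2 * m)) (pParam (K + 2) β (2 * m)) σ i j
        ≤ C * d / (2 * m : ℕ) := fun i j => by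
      refine (EWf_le _ _ p0 hpq σ i j).trans ?_
      rw [hCd, hdd]; exact pB
    refine (prob_fixed (by omega) _ _ q0 hpq hple σ hσ d C C' g h e K1 K2 l ε θ θ2 θ3 c hd0 hC0.le
      hC'0.le hh hK1 hK12 hl hg hε0 hB hconst hθ hθ2 hθh hg2 hθ3 hθ31 hc).trans ?_
    simp only [hb]
    rw [← hdd] at pc qc hdc ⊢
    have hchoose : ((2 * m - 1).choose (K + 1) : ℝ) ≠ 0 := by
      have : (2 * m - 1).choose (K + 1) ≠ 0 := (Nat.choose_pos (by omega)).ne'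
      exact_mod_cast this
    refine add_le_add ?_ (add_le_add ?_ (add_le_add ?_ ?_))
    · rw [pc, hexpd, ← Real.exp_add]
      apply Real.exp_le_exp.mpr
      rw [hC'd]
      have hαd := mul_pos hα hd0
      linarith only [hαd]
    · apply sub_le_sub_right
      have e1 : 1 + Real.exp (-3 * d) ≤ Real.exp (Real.exp (-3 * d)) := by
        have := Real.add_one_le_exp (Real.exp (-3 * d)); linarith
      refine (pow_le_pow_left₀ (by positivity) e1 _).trans (le_of_eq ?_)
      rw [← Real.exp_nat_mul, hexpd, ← Real.exp_add]
      congr 2; ring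
    · apply Real.exp_le_exp.mpr
      rw [div_le_iff₀ hc0] at hdc
      have e1 : d ≤ ((2 * m : ℕ) : ℝ) := by
        rw [hexpd]; have := Real.add_one_le_exp d; linarith
      have e2 : Real.log 4 - c * d ≤ -1 := by linarith
      have e3 := mul_le_mul_of_nonneg_left e2 hNpos.le
      linarith
    · have e1 : pParam (K + 2) β (2 * m) * (((2 * m : ℕ) * Real.cosh θ) ^ (K + 1)
          / ((K + 1).factorial : ℝ) - ((2 * m - 1).choose (K + 1) : ℝ))
          + (pParam (K + 2) α (2 * m) - pParam (K + 2) β (2 * m)) * ((m - 1).choose (K + 1) : ℝ)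
            * (Real.exp (-θ * (K + 1 : ℕ)) - 1)
          = d * (β * (((2 * m : ℕ) * Real.cosh θ) ^ (K + 1) / ((K + 1).factorial : ℝ)
            / ((2 * m - 1).choose (K + 1) : ℝ) - 1)
            + (α - β) * (((m - 1).choose (K + 1) : ℝ) / ((2 * m - 1).choose (K + 1) : ℝ))
            * (Real.exp (-θ * (K + 1 : ℕ)) - 1)) := by
        have f1 : pParam (K + 2) α (2 * m) = α * d / ((2 * m - 1).choose (K + 1) : ℝ) := by
          rw [eq_div_iff hchoose]; exact pc
        have f2 : pParam (K + 2) β (2 * m) = β * d / ((2 * m - 1).choose (K + 1) : ℝ) := by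
          rw [eq_div_iff hchoose]; exact qc
        rw [f1, f2]
        generalize ((2 * m : ℕ) * Real.cosh θ) ^ (K + 1) / ((K + 1).factorial : ℝ) = X
        generalize Real.exp (-θ * (K + 1 : ℕ)) - 1 = Y
        field_simp
      rw [e1]
      have e2 := mul_le_mul_of_nonneg_left ham hd0.le
      refine (mul_le_mul_of_nonneg_left (Real.exp_le_exp.mpr
        (add_le_add_right e2 (θ * (ε * d)))) hNpos.le).trans ?_
      rw [hexpd, ← Real.exp_add]
      apply Real.exp_le_exp.mpr
      have e3 : θ * (ε * d) = δ * d := by rw [← hθε]; ring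
      have e4 : Lm = -1 - 4 * δ := by rw [hδ]; ring
      rw [e3, e4]
      linarith only [hd0]
  have hone : Tendsto (fun m => 1 - b m) atTop (nhds 1) := by
    have := (tendsto_const_nhds (x := (1:ℝ))).sub hbt
    rwa [sub_zero] at this
  exact tendsto_of_tendsto_of_tendsto_of_le_of_le' hone tendsto_const_nhds
    (hev.mono fun m hm => hm.1) (hev.mono fun m hm => hm.2)
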